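/- Let n, k, d be integers with d ≥ 2 and 1 ≤ k ≤ n−1. A tree with boundary G has the Faber-Krahn property in the class T_d^{(n,k)} of all trees with boundary with n vertices and k interior vertices in which every interior vertex has degree at least d, if and only if G is an SLO*-tree in which exactly one interior vertex has degree d° = d + Σ_{v∈V₀}(d_v − d) (equivalently d° = (n+k−2) − (k−1)d, since the interior degrees of any tree in the class sum to n+k−2) and all other interior vertices have degree exactly d. Moreover G is then uniquely determined up to isomorphism. -/

import Mathlib

/-!
Number the vertices of a tree `G` of the class by decreasing values of its positive first Dirichlet
eigenfunction `f`; the `k` interior vertices then come first. Summation by parts turns the energy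
of `f` into `∑ (f a - f (a+1)) (f b - f (b+1)) cut(min a b + 1, max a b + 1)`, where `cut(a, b)`
counts the edges from the first `a` vertices to vertices that are not among the first `b`. If `D`
is the degree sum of the first `a ≤ b` vertices, then `cut(a, b) ≥ D - (a + b - 2)`, because a
subgraph of a tree is a forest. Breadth-first numberings attain the maximum of this bound and `0`,
and `D` is smallest for the degrees `d, …, d, d°`. Hence the breadth-first ("spiral") tree with
these degrees minimises all the coefficients at once, and so `λ`.

If `λ(G)` is minimal, then `f` is also an eigenfunction of the spiral tree, and the coefficients
at the ends of the level sets of `f` agree. In the spiral tree, vertices with equal values have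
children with equal values. It follows that in `G` every vertex but the first has exactly one
smaller neighbour, its parent, and that the parents of vertices with different values are in the
correct order. Exchanging vertices with equal values until the sequence of parents is
lexicographically minimal therefore leads to a spiral tree, and a spiral tree is determined by its
degrees.

Numbering an SLO*-tree along its ordering also gives a spiral tree. If only one interior degree
differs from `d`, then, the degrees being monotone, it may be taken to be the last one, so that
the tree is the same as before.
-/

/-!
Common definitions for Faber-Krahn type inequalities for trees
(Bıyıkoğlu–Leydold, "Faber-Krahn Type Inequalities for Trees").

A *tree (graph) with boundary* is a finite simple connected graph in which
boundary vertices are exactly the vertices of degree 1 and interior vertices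
are the vertices of degree ≥ 2; both sets are required to be nonempty.
The Dirichlet operator is the Laplacian restricted to functions vanishing on
the boundary; `dirichletLambda` is its smallest eigenvalue.
-/

open Finset
open scoped Classical

noncomputable section

namespace FK

variable {V : Type*} [Fintype V] [DecidableEq V]

/-- A vertex is a boundary vertex iff it has degree `1`. -/
def IsBoundary (G : SimpleGraph V) (v : V) : Prop := G.degree v = 1

/-- A vertex is an interior vertex iff it has degree at least `2`. -/
def IsInterior (G : SimpleGraph V) (v : V) : Prop := 2 ≤ G.degree v

/-- A tree with boundary: a tree with at least one interior and
one boundary vertex. -/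
def IsTreeWithBoundary (G : SimpleGraph V) : Prop :=
  G.IsTree ∧ (∃ v, IsInterior G v) ∧ (∃ v, IsBoundary G v)

/-- A connected graph with boundary: every vertex is either a boundary vertex
(degree 1) or an interior vertex (degree ≥ 2), both kinds occur, and no edge
joins two boundary vertices. -/
def IsGraphWithBoundary (G : SimpleGraph V) : Prop :=
  G.Connected ∧ (∀ v, IsBoundary G v ∨ IsInterior G v) ∧
    (∃ v, IsInterior G v) ∧ (∃ v, IsBoundary G v) ∧
    (∀ v w, G.Adj v w → IsBoundary G v → ¬ IsBoundary G w)

/-- The finset of interior vertices. -/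
def interiorFinset (G : SimpleGraph V) : Finset V := univ.filter (fun v => IsInterior G v)

/-- The finset of boundary vertices. -/
def boundaryFinset (G : SimpleGraph V) : Finset V := univ.filter (fun v => IsBoundary G v)

/-- The degree sequence of `G`, as a multiset. -/
def degreeMultiset (G : SimpleGraph V) : Multiset ℕ := Finset.univ.val.map (fun v => G.degree v)

/-- The graph Laplacian `Δ = D - A` applied to a function `f : V → ℝ`. -/
def lapApply (G : SimpleGraph V) (f : V → ℝ) (v : V) : ℝ :=
  (G.degree v : ℝ) * f v - ∑ w ∈ G.neighborFinset v, f w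

/-- `f` (vanishing on the boundary, nonzero) is an eigenfunction of the
Dirichlet operator `Δ₀` with eigenvalue `μ`: the eigenvalue equation holds at
every interior vertex. -/
def IsDirichletEigenpair (G : SimpleGraph V) (μ : ℝ) (f : V → ℝ) : Prop :=
  f ≠ 0 ∧ (∀ v, IsBoundary G v → f v = 0) ∧
    ∀ v, IsInterior G v → lapApply G f v = μ * f v

/-- The first (smallest) Dirichlet eigenvalue `λ(G)`. -/
def dirichletLambda (G : SimpleGraph V) : ℝ :=
  sInf {μ : ℝ | ∃ f : V → ℝ, IsDirichletEigenpair G μ f}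

/-- The quadratic form `⟨Δ f, f⟩ = Σ_{(u,v)∈E} (f u - f v)²` of the Laplacian
(each edge counted once). -/
def quadForm (G : SimpleGraph V) (f : V → ℝ) : ℝ :=
  (∑ v, ∑ w ∈ G.neighborFinset v, (f v - f w) ^ 2) / 2

/-- The Rayleigh quotient `R_G(f)`. -/
def rayleigh (G : SimpleGraph V) (f : V → ℝ) : ℝ :=
  quadForm G f / ∑ v, f v ^ 2

/-- `w` is a child of `v` in the tree `G` rooted at `v₀`
(heights are distances from the root `v₀`). -/
def IsChild (G : SimpleGraph V) (v₀ v w : V) : Prop :=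
  G.Adj v w ∧ G.dist v₀ w = G.dist v₀ v + 1

/-- A spiral-like ordering (SLO-ordering) of the vertices of the tree `G`
rooted at `v₀`: a (strict) well-ordering `lt` satisfying (S1)-(S3). -/
def IsSLOOrdering (G : SimpleGraph V) (v₀ : V) (lt : V → V → Prop) : Prop :=
  IsStrictTotalOrder V lt ∧
  (∀ v w, lt v w → G.dist v₀ v ≤ G.dist v₀ w) ∧
  (∀ v₁ v₂ w₁ w₂, lt v₁ v₂ → IsChild G v₀ v₁ w₁ → IsChild G v₀ v₂ w₂ → lt w₁ w₂) ∧
  (∀ v w, lt v w → IsBoundary G v → IsBoundary G w)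

/-- A spiral-like ordering with increasing degrees (SLO*-ordering):
additionally (S4). -/
def IsSLOStarOrdering (G : SimpleGraph V) (v₀ : V) (lt : V → V → Prop) : Prop :=
  IsSLOOrdering G v₀ lt ∧
  ∀ v w, lt v w → IsInterior G v → IsInterior G w → G.degree v ≤ G.degree w

/-- An SLO-tree: a tree with boundary admitting an SLO-ordering. -/
def IsSLOTree (G : SimpleGraph V) : Prop :=
  IsTreeWithBoundary G ∧ ∃ (v₀ : V) (lt : V → V → Prop), IsSLOOrdering G v₀ lt

/-- An SLO*-tree: a tree with boundary admitting an SLO*-ordering. -/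
def IsSLOStarTree (G : SimpleGraph V) : Prop :=
  IsTreeWithBoundary G ∧ ∃ (v₀ : V) (lt : V → V → Prop), IsSLOStarOrdering G v₀ lt

end FK

namespace FK

/-- Membership in the class `T_d^(n,k)`: trees with boundary with `n` vertices,
`k` interior vertices, every interior vertex of degree at least `d`. -/
def inClassTd (k d : ℕ) {n : ℕ} (G : SimpleGraph (Fin n)) : Prop :=
  IsTreeWithBoundary G ∧ (interiorFinset G).card = k ∧
    ∀ v, IsInterior G v → d ≤ G.degree v

/-- The Faber-Krahn property in `T_d^(n,k)`. -/
def hasFKTd (k d : ℕ) {n : ℕ} (G : SimpleGraph (Fin n)) : Prop :=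
  inClassTd k d G ∧ ∀ G' : SimpleGraph (Fin n), inClassTd k d G' →
    dirichletLambda G ≤ dirichletLambda G'

/-! ### The first Dirichlet eigenvalue -/

section Rayleigh

open Matrix

lemma exists_posSemidef_sub_smul_one {ι : Type*} [Fintype ι] [DecidableEq ι] [Nonempty ι]
    {A : Matrix ι ι ℝ} (hA : A.IsHermitian) :
    ∃ μ : ℝ, (A - μ • (1 : Matrix ι ι ℝ)).PosSemidef ∧ ∃ x ≠ 0, A *ᵥ x = μ • x := by
  obtain ⟨i, hi⟩ := Finite.exists_min hA.eigenvalues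
  refine ⟨hA.eigenvalues i, ?_, hA.eigenvectorBasis i, ?_, hA.mulVec_eigenvectorBasis i⟩
  · rw [posSemidef_iff_isHermitian_and_spectrum_nonneg, ← Algebra.algebraMap_eq_smul_one,
      ← spectrum.sub_singleton_eq, hA.spectrum_real_eq_range_eigenvalues]
    refine ⟨hA.sub ?_, ?_⟩
    · rw [Algebra.algebraMap_eq_smul_one]
      exact isHermitian_one.smul (IsSelfAdjoint.all _)
    · rintro _ ⟨_, ⟨j, rfl⟩, _, rfl, rfl⟩
      simpa using hi j
  · simpa using hA.eigenvectorBasis.toBasis.ne_zero i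

variable {V : Type*} [Fintype V] {G : SimpleGraph V} {f : V → ℝ}

/-- The Dirichlet operator `Δ₀`. -/
def dirichletMatrix (G : SimpleGraph V) : Matrix {v // IsInterior G v} {v // IsInterior G v} ℝ :=
  (G.lapMatrix ℝ).submatrix Subtype.val Subtype.val

lemma isHermitian_dirichletMatrix (G : SimpleGraph V) : (dirichletMatrix G).IsHermitian :=
  (G.isHermitian_lapMatrix ℝ).submatrix _

lemma lapApply_eq_mulVec (G : SimpleGraph V) (f : V → ℝ) (v : V) :
    lapApply G f v = (G.lapMatrix ℝ *ᵥ f) v :=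
  (G.lapMatrix_mulVec_apply v f).symm

lemma quadForm_eq_dotProduct (G : SimpleGraph V) (f : V → ℝ) :
    quadForm G f = f ⬝ᵥ G.lapMatrix ℝ *ᵥ f := by
  rw [← toLinearMap₂'_apply', G.lapMatrix_toLinearMap₂' ℝ f, quadForm]
  simp only [G.neighborFinset_eq_filter, sum_filter]

lemma sum_interior_eq (g : V → ℝ) (hg : ∀ v, ¬IsInterior G v → g v = 0) :
    ∑ v : {v // IsInterior G v}, g v = ∑ v, g v := by
  have hbd : ∑ v : {v // ¬IsInterior G v}, g v = 0 := sum_eq_zero fun v _ => hg v v.2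
  rw [← Fintype.sum_subtype_add_sum_subtype (IsInterior G) g, hbd, add_zero]

lemma lapApply_eq_dirichletMatrix_mulVec (hf : ∀ v, ¬IsInterior G v → f v = 0)
    (v : {v // IsInterior G v}) :
    lapApply G f v = (dirichletMatrix G *ᵥ fun w => f w) v := by
  rw [lapApply_eq_mulVec]
  exact (sum_interior_eq (fun w => G.lapMatrix ℝ v w * f w)
    fun w hw => by simp only [hf w hw, mul_zero]).symm

lemma quadForm_eq_sum_interior (hf : ∀ v, ¬IsInterior G v → f v = 0) :
    quadForm G f = ∑ v : {v // IsInterior G v}, f v * lapApply G f v := by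
  simp only [quadForm_eq_dotProduct, dotProduct, lapApply_eq_mulVec]
  exact (sum_interior_eq (fun v => f v * (G.lapMatrix ℝ *ᵥ f) v)
    fun v hv => by simp only [hf v hv, zero_mul]).symm

lemma sum_interior_sq_eq (hf : ∀ v, ¬IsInterior G v → f v = 0) :
    ∑ v : {v // IsInterior G v}, f v ^ 2 = ∑ v, f v ^ 2 :=
  sum_interior_eq (fun v => f v ^ 2) fun v hv => by simp only [hf v hv, sq, zero_mul]

lemma quadForm_eq_mul_sum_sq {μ : ℝ} (hf : ∀ v, ¬IsInterior G v → f v = 0)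
    (hμ : ∀ v, IsInterior G v → lapApply G f v = μ * f v) :
    quadForm G f = μ * ∑ v, f v ^ 2 := by
  rw [quadForm_eq_sum_interior hf, ← sum_interior_sq_eq hf, mul_sum]
  exact sum_congr rfl fun v _ => by rw [hμ v v.2]; ring

lemma dotProduct_dirichletMatrix_sub (hf : ∀ v, ¬IsInterior G v → f v = 0) (μ : ℝ) :
    (fun v : {v // IsInterior G v} => f v) ⬝ᵥ
        (dirichletMatrix G - μ • (1 : Matrix {v // IsInterior G v} {v // IsInterior G v} ℝ)) *ᵥ
          (fun v => f v) =
      quadForm G f - μ * ∑ v, f v ^ 2 := by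
  rw [sub_mulVec, smul_mulVec, one_mulVec, dotProduct_sub, dotProduct_smul, smul_eq_mul,
    quadForm_eq_sum_interior hf, ← sum_interior_sq_eq hf]
  congr 1
  · exact sum_congr rfl fun v _ => by rw [lapApply_eq_dirichletMatrix_mulVec hf]
  · simp only [dotProduct, sq]

lemma sum_sq_pos (hf : f ≠ 0) : 0 < ∑ v, f v ^ 2 := by
  obtain ⟨v, hv⟩ := Function.ne_iff.mp hf
  exact sum_pos' (fun v _ => sq_nonneg (f v)) ⟨v, mem_univ v, sq_pos_of_ne_zero hv⟩

lemma quadForm_abs_le (G : SimpleGraph V) (f : V → ℝ) :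
    quadForm G (fun v => |f v|) ≤ quadForm G f := by
  refine div_le_div_of_nonneg_right (sum_le_sum fun v _ => sum_le_sum fun w _ => ?_) two_pos.le
  exact sq_le_sq.mpr (abs_abs_sub_abs_le_abs_sub (f v) (f w))

lemma not_isInterior_iff_isBoundary (hG : G.Connected) (hI : ∃ v, IsInterior G v) (v : V) :
    ¬IsInterior G v ↔ IsBoundary G v := by
  obtain ⟨u, hu⟩ := hI
  obtain ⟨w, huw⟩ := (G.degree_pos_iff_exists_adj u).mp (two_pos.trans_le hu)
  have : Nontrivial V := ⟨u, w, huw.ne⟩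
  have := hG.preconnected.degree_pos_of_nontrivial v
  unfold IsInterior IsBoundary
  omega

lemma exists_posSemidef_dirichletMatrix_sub (hG : G.Connected) (hI : ∃ v, IsInterior G v) :
    (dirichletMatrix G - dirichletLambda G • 1).PosSemidef ∧
      ∃ f, IsDirichletEigenpair G (dirichletLambda G) f := by
  obtain ⟨v₀, hv₀⟩ := hI
  have hbd := not_isInterior_iff_isBoundary hG ⟨v₀, hv₀⟩
  have : Nonempty {v // IsInterior G v} := ⟨v₀, hv₀⟩
  obtain ⟨μ, hμ, x, hx, hxμ⟩ := exists_posSemidef_sub_smul_one (isHermitian_dirichletMatrix G)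
  let f : V → ℝ := fun v => if hv : IsInterior G v then x ⟨v, hv⟩ else 0
  have hfx : (fun v : {v // IsInterior G v} => f v) = x := funext fun v => dif_pos v.2
  have hf : IsDirichletEigenpair G μ f := by
    have hf0 : ∀ v, ¬IsInterior G v → f v = 0 := fun v hv => dif_neg hv
    refine ⟨fun h => hx (by rw [← hfx, h]; rfl), fun v hv => hf0 v ((hbd v).mpr hv),
      fun v hv => ?_⟩
    rw [lapApply_eq_dirichletMatrix_mulVec hf0 ⟨v, hv⟩, hfx, hxμ, ← hfx]
    rfl
  have hleast : IsLeast {μ : ℝ | ∃ f : V → ℝ, IsDirichletEigenpair G μ f} μ := by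
    refine ⟨⟨f, hf⟩, ?_⟩
    rintro ν ⟨g, hg0, hgb, hgν⟩
    have hgI : ∀ v, ¬IsInterior G v → g v = 0 := fun v hv => hgb v ((hbd v).mp hv)
    have hnonneg := hμ.dotProduct_mulVec_nonneg (fun v => g v)
    rw [star_trivial, dotProduct_dirichletMatrix_sub hgI, sub_nonneg,
      quadForm_eq_mul_sum_sq hgI hgν] at hnonneg
    exact le_of_mul_le_mul_right hnonneg (sum_sq_pos hg0)
  rw [show dirichletLambda G = μ from hleast.csInf_eq]
  exact ⟨hμ, f, hf⟩

lemma dirichletLambda_mul_sum_sq_le (hG : G.Connected) (hI : ∃ v, IsInterior G v)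
    (hf : ∀ v, ¬IsInterior G v → f v = 0) :
    dirichletLambda G * ∑ v, f v ^ 2 ≤ quadForm G f := by
  have h := (exists_posSemidef_dirichletMatrix_sub hG hI).1.dotProduct_mulVec_nonneg (fun v => f v)
  rwa [star_trivial, dotProduct_dirichletMatrix_sub hf, sub_nonneg] at h

lemma lapApply_eq_of_quadForm_eq (hG : G.Connected) (hI : ∃ v, IsInterior G v)
    (hf : ∀ v, ¬IsInterior G v → f v = 0)
    (hfe : quadForm G f = dirichletLambda G * ∑ v, f v ^ 2) {v : V} (hv : IsInterior G v) :
    lapApply G f v = dirichletLambda G * f v := by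
  have hpsd := (exists_posSemidef_dirichletMatrix_sub hG hI).1
  have hker := (hpsd.dotProduct_mulVec_zero_iff fun v => f v).mp
    (by rw [star_trivial, dotProduct_dirichletMatrix_sub hf, sub_eq_zero, hfe])
  rw [sub_mulVec, smul_mulVec, one_mulVec, sub_eq_zero] at hker
  rw [lapApply_eq_dirichletMatrix_mulVec hf ⟨v, hv⟩, hker]
  rfl

lemma eq_zero_of_lapApply_eq_zero (hf : ∀ v, 0 ≤ f v) {v w : V} (hv : f v = 0)
    (hlap : lapApply G f v = 0) (hvw : G.Adj v w) : f w = 0 := by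
  rw [lapApply, hv, mul_zero, zero_sub, neg_eq_zero,
    sum_eq_zero_iff_of_nonneg fun u _ => hf u] at hlap
  exact hlap w ((G.mem_neighborFinset v w).mpr hvw)

lemma IsBoundary.eq_of_adj {u v w : V} (hv : IsBoundary G v) (hu : G.Adj v u) (hw : G.Adj v w) :
    u = w :=
  card_le_one.mp hv.le u ((G.mem_neighborFinset v u).mpr hu) w ((G.mem_neighborFinset v w).mpr hw)

/-- A zero at an interior vertex spreads along walks, because boundary vertices are leaves. -/
lemma eq_zero_of_eq_zero_of_isInterior (hG : G.Connected) {μ : ℝ} (hf : ∀ v, 0 ≤ f v)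
    (hμ : ∀ v, IsInterior G v → lapApply G f v = μ * f v) {v : V} (hv : IsInterior G v)
    (hfv : f v = 0) : f = 0 := by
  have hspread : ∀ u, IsInterior G u → f u = 0 → ∀ w, G.Adj u w → f w = 0 :=
    fun u hu hfu w => eq_zero_of_lapApply_eq_zero hf hfu (by rw [hμ u hu, hfu, mul_zero])
  have hwalk : ∀ u w : V, G.Walk u w → f u = 0 → (∀ x, G.Adj u x → f x = 0) → f w = 0 := by
    intro u w p
    induction p with
    | nil => exact fun hu _ => hu
    | @cons u u' _ huu' _ ih =>
      intro hu hnbr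
      refine ih (hnbr u' huu') fun x hx => ?_
      by_cases hu' : IsInterior G u'
      · exact hspread u' hu' (hnbr u' huu') x hx
      · have hbd := (not_isInterior_iff_isBoundary hG ⟨v, hv⟩ u').mp hu'
        rwa [hbd.eq_of_adj hx huu'.symm]
  funext w
  obtain ⟨p⟩ := hG.preconnected v w
  exact hwalk v w p hfv (hspread v hv hfv)

/-- A positive first Dirichlet eigenfunction, characterised as a minimiser of the Rayleigh
quotient. -/
structure IsGroundState (G : SimpleGraph V) (f : V → ℝ) : Prop where
  eq_zero : ∀ v, ¬IsInterior G v → f v = 0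
  pos : ∀ v, IsInterior G v → 0 < f v
  quadForm_eq : quadForm G f = dirichletLambda G * ∑ v, f v ^ 2

lemma exists_isGroundState (hG : G.Connected) (hI : ∃ v, IsInterior G v) :
    ∃ f, IsGroundState G f := by
  obtain ⟨f, hf0, hfb, hfe⟩ := (exists_posSemidef_dirichletMatrix_sub hG hI).2
  have hfI : ∀ v, ¬IsInterior G v → f v = 0 :=
    fun v hv => hfb v ((not_isInterior_iff_isBoundary hG hI v).mp hv)
  have habsI : ∀ v, ¬IsInterior G v → |f v| = 0 := fun v hv => by rw [hfI v hv, abs_zero]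
  have habs : quadForm G (fun v => |f v|) = dirichletLambda G * ∑ v, |f v| ^ 2 := by
    refine (quadForm_abs_le G f).trans ?_ |>.antisymm (dirichletLambda_mul_sum_sq_le hG hI habsI)
    simp only [sq_abs, quadForm_eq_mul_sum_sq hfI hfe, le_refl]
  refine ⟨fun v => |f v|, habsI, fun v hv => (abs_nonneg (f v)).lt_of_ne' fun hv0 => hf0 ?_, habs⟩
  have hzero := eq_zero_of_eq_zero_of_isInterior hG (fun v => abs_nonneg (f v))
    (fun u hu => lapApply_eq_of_quadForm_eq hG hI habsI habs hu) hv hv0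
  exact funext fun w => abs_eq_zero.mp (congrFun hzero w)

end Rayleigh

/-! ### Edges between initial segments -/

section Interedges

variable {V : Type*} {G : SimpleGraph V} {A B C : Finset V}

lemma card_interedges_comm (G : SimpleGraph V) (A B : Finset V) :
    #(G.interedges A B) = #(G.interedges B A) :=
  have : Std.Symm G.Adj := ⟨fun _ _ => G.adj_symm⟩
  Rel.card_interedges_comm A B

lemma card_interedges_eq_sum (G : SimpleGraph V) (A B : Finset V) :
    #(G.interedges A B) = ∑ v ∈ A, #{w ∈ B | G.Adj v w} := by
  rw [G.interedges_def, card_filter, sum_product]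
  simp only [card_filter]

lemma not_adj_of_card_interedges_eq_zero (h : #(G.interedges A B) = 0) {v w : V} (hv : v ∈ A)
    (hw : w ∈ B) : ¬G.Adj v w := fun hvw =>
  (card_pos.mpr ⟨(v, w), G.mk_mem_interedges_iff.mpr ⟨hv, hw, hvw⟩⟩).ne' h

lemma card_edgeFinset_lt_of_isAcyclic [Fintype V] [Nonempty V] [Fintype G.edgeSet]
    (hG : G.IsAcyclic) :
    #G.edgeFinset < Fintype.card V := by
  obtain ⟨T, hGT, -, hT⟩ :=
    (SimpleGraph.connected_top (V := V)).exists_isTree_le_of_le_of_isAcyclic le_top hG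
  rw [← hT.card_edgeFinset, Nat.lt_succ_iff]
  exact card_le_card (SimpleGraph.edgeFinset_mono hGT)

lemma card_interedges_self (G : SimpleGraph V) (A : Finset V) :
    #(G.interedges A A) = 2 * #(G.induce (A : Set V)).edgeFinset := by
  rw [← SimpleGraph.sum_degrees_eq_twice_card_edges, card_interedges_eq_sum, ← sum_coe_sort A]
  refine sum_congr rfl fun v _ => ?_
  rw [← SimpleGraph.card_neighborFinset_eq_degree, SimpleGraph.neighborFinset_eq_filter,
    card_filter, ← sum_coe_sort A, card_filter]
  rfl

lemma card_interedges_self_add_two_le (hG : G.IsAcyclic) (hA : A.Nonempty) :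
    #(G.interedges A A) + 2 ≤ 2 * #A := by
  have : Nonempty A := hA.to_subtype
  have hlt : #(G.induce (A : Set V)).edgeFinset < Fintype.card A :=
    card_edgeFinset_lt_of_isAcyclic (hG.induce _)
  rw [Fintype.card_coe] at hlt
  rw [card_interedges_self]
  omega

lemma card_interedges_add_sdiff_right [DecidableEq V] (G : SimpleGraph V) (A : Finset V)
    (hBC : B ⊆ C) :
    #(G.interedges A B) + #(G.interedges A (C \ B)) = #(G.interedges A C) := by
  rw [← card_union_of_disjoint (G.interedges_disjoint_right A disjoint_sdiff)]
  congr 1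
  ext ⟨v, w⟩
  have := @hBC w
  simp only [mem_union, G.mk_mem_interedges_iff, mem_sdiff]
  tauto

lemma card_interedges_add_sdiff_left [DecidableEq V] (G : SimpleGraph V) (A : Finset V)
    (hBC : B ⊆ C) :
    #(G.interedges B A) + #(G.interedges (C \ B) A) = #(G.interedges C A) := by
  rw [card_interedges_comm G B, card_interedges_comm G (C \ B), card_interedges_comm G C,
    card_interedges_add_sdiff_right G A hBC]

lemma two_mul_card_interedges [DecidableEq V] (G : SimpleGraph V) (hAB : A ⊆ B) :
    2 * #(G.interedges A B) + #(G.interedges (B \ A) (B \ A)) =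
      #(G.interedges A A) + #(G.interedges B B) := by
  have h₁ := card_interedges_add_sdiff_right G A hAB
  have h₂ := card_interedges_add_sdiff_left G B hAB
  have h₃ := card_interedges_add_sdiff_right G (B \ A) hAB
  have h₄ := card_interedges_comm G A (B \ A)
  omega

lemma card_interedges_add_compl [Fintype V] [DecidableEq V] (G : SimpleGraph V) (A B : Finset V) :
    #(G.interedges A B) + #(G.interedges A Bᶜ) = ∑ v ∈ A, G.degree v := by
  rw [compl_eq_univ_sdiff, card_interedges_add_sdiff_right G A (subset_univ B),
    card_interedges_eq_sum]
  refine sum_congr rfl fun v _ => ?_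
  rw [← G.neighborFinset_eq_filter, G.card_neighborFinset_eq_degree]

lemma card_interedges_add_two_le (hG : G.IsAcyclic) (hA : A.Nonempty) (hAB : A ⊆ B) :
    #(G.interedges A B) + 2 ≤ #A + #B := by
  have h₁ := card_interedges_self_add_two_le hG hA
  have h₂ := card_interedges_self_add_two_le hG (hA.mono hAB)
  have h₃ := two_mul_card_interedges G hAB
  omega

lemma card_interedges_sdiff_eq_zero [DecidableEq V] (hG : G.IsAcyclic) (hA : A.Nonempty)
    (hAB : A ⊆ B) (h : #(G.interedges A B) + 2 = #A + #B) :
    #(G.interedges (B \ A) (B \ A)) = 0 := by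
  have h₁ := card_interedges_self_add_two_le hG hA
  have h₂ := card_interedges_self_add_two_le hG (hA.mono hAB)
  have h₃ := two_mul_card_interedges G hAB
  omega

lemma card_adj_eq_one [DecidableEq V] (hG : G.IsAcyclic) (hA : A.Nonempty) (hAB : A ⊆ B)
    (h : #(G.interedges A B) + 2 = #A + #B) {v : V} (hv : v ∈ B \ A) :
    #{w ∈ A | G.Adj v w} = 1 := by
  have h₁ := card_interedges_self_add_two_le hG hA
  have h₂ := card_interedges_self_add_two_le hG (hA.mono hAB)
  have h₃ := two_mul_card_interedges G hAB
  have hle : ∀ u ∈ B \ A, #{w ∈ A | G.Adj u w} ≤ 1 := by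
    intro u hu
    have hu' := (mem_sdiff.mp hu).2
    have h₄ := card_interedges_add_two_le hG hA (subset_insert u A)
    have h₅ := card_interedges_add_sdiff_left G A (subset_insert u A)
    rw [insert_sdiff_cancel hu', card_interedges_eq_sum G {u}, sum_singleton,
      card_interedges_comm G (insert u A)] at h₅
    rw [card_insert_of_notMem hu'] at h₄
    omega
  have hsum : ∑ u ∈ B \ A, #{w ∈ A | G.Adj u w} = ∑ u ∈ B \ A, 1 := by
    have h₄ := card_interedges_add_sdiff_right G A hAB
    have h₅ := card_sdiff_add_card_eq_card hAB
    rw [card_interedges_comm G A (B \ A), card_interedges_eq_sum G (B \ A)] at h₄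
    rw [← card_eq_sum_ones]
    omega
  exact (sum_eq_sum_iff_of_le hle).mp hsum v hv

end Interedges

section InitSeg

variable {n a b : ℕ} {G : SimpleGraph (Fin n)}

/-- The first `a` vertices. -/
def initSeg (n a : ℕ) : Finset (Fin n) := univ.filter (·.val < a)

@[simp] lemma mem_initSeg {i : Fin n} : i ∈ initSeg n a ↔ i.val < a := by simp [initSeg]

lemma card_initSeg (ha : a ≤ n) : #(initSeg n a) = a := by
  rw [initSeg, Fin.card_filter_val_lt, min_eq_right ha]

lemma initSeg_mono (hab : a ≤ b) : initSeg n a ⊆ initSeg n b := fun i => by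
  simpa only [mem_initSeg] using fun h => h.trans_le hab

lemma initSeg_nonempty (ha : 1 ≤ a) (han : a ≤ n) : (initSeg n a).Nonempty :=
  card_pos.mp (by rwa [card_initSeg han])

/-- The sum of the degrees of the first `a` vertices. -/
def degreeSum (G : SimpleGraph (Fin n)) (a : ℕ) : ℕ := ∑ i ∈ initSeg n a, G.degree i

/-- The number of edges leading from the first `a` vertices to vertices that are not among the
first `b`. -/
def cut (G : SimpleGraph (Fin n)) (a b : ℕ) : ℕ := #(G.interedges (initSeg n a) (initSeg n b)ᶜ)

lemma cut_self_right (G : SimpleGraph (Fin n)) (a : ℕ) : cut G a n = 0 := by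
  rw [cut, card_eq_zero, eq_empty_iff_forall_notMem]
  simp [SimpleGraph.mem_interedges_iff]

lemma card_interedges_add_cut (G : SimpleGraph (Fin n)) (a b : ℕ) :
    #(G.interedges (initSeg n a) (initSeg n b)) + cut G a b = degreeSum G a :=
  card_interedges_add_compl G _ _

lemma degreeSum_add_two_le (hG : G.IsAcyclic) (ha : 1 ≤ a) (hab : a ≤ b) (hb : b ≤ n) :
    degreeSum G a + 2 ≤ cut G a b + (a + b) := by
  have h := card_interedges_add_two_le hG (initSeg_nonempty ha (hab.trans hb)) (initSeg_mono hab)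
  rw [card_initSeg hb, card_initSeg (hab.trans hb)] at h
  have := card_interedges_add_cut G a b
  omega

lemma lt_of_adj_of_cut_eq_zero (h : cut G a b = 0) {i j : Fin n} (hij : G.Adj i j)
    (hi : i.val < a) : j.val < b := by
  by_contra hj
  exact not_adj_of_card_interedges_eq_zero h (mem_initSeg.mpr hi)
    (mem_compl.mpr fun h => hj (mem_initSeg.mp h)) hij

lemma not_adj_of_degreeSum_add_two_eq (hG : G.IsAcyclic) (ha : 1 ≤ a) (hb : b ≤ n)
    (h : degreeSum G a + 2 = cut G a b + (a + b)) {i j : Fin n} (hi : a ≤ i.val) (hib : i.val < b)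
    (hj : a ≤ j.val) (hjb : j.val < b) : ¬G.Adj i j := by
  have hab := (hi.trans_lt hib).le
  have := card_interedges_add_cut G a b
  refine not_adj_of_card_interedges_eq_zero
    (card_interedges_sdiff_eq_zero hG (initSeg_nonempty ha (hab.trans hb)) (initSeg_mono hab) ?_)
    ?_ ?_
  · rw [card_initSeg hb, card_initSeg (hab.trans hb)]; omega
  all_goals simp only [mem_sdiff, mem_initSeg]; omega

lemma existsUnique_adj_of_degreeSum_add_two_eq (hG : G.IsAcyclic) (ha : 1 ≤ a) (hb : b ≤ n)
    (h : degreeSum G a + 2 = cut G a b + (a + b)) {i : Fin n} (hi : a ≤ i.val) (hib : i.val < b) :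
    ∃! j : Fin n, j.val < a ∧ G.Adj i j := by
  have hab := (hi.trans_lt hib).le
  have := card_interedges_add_cut G a b
  have hone := card_adj_eq_one (v := i) hG (initSeg_nonempty ha (hab.trans hb)) (initSeg_mono hab)
    (by rw [card_initSeg hb, card_initSeg (hab.trans hb)]; omega)
    (by simp only [mem_sdiff, mem_initSeg]; omega)
  simpa [card_eq_one_iff_existsUnique] using hone

lemma degreeSum_succ (G : SimpleGraph (Fin n)) (i : Fin n) :
    degreeSum G (i + 1) = degreeSum G i + G.degree i := by
  have hins : initSeg n (i + 1) = insert i (initSeg n i) := by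
    ext j
    simp only [mem_initSeg, mem_insert, Fin.ext_iff]
    omega
  rw [degreeSum, hins, sum_insert (by simp), degreeSum, add_comm]

lemma degreeSum_self (G : SimpleGraph (Fin n)) : degreeSum G n = 2 * #G.edgeFinset := by
  rw [← G.sum_degrees_eq_twice_card_edges, degreeSum]
  exact sum_congr (by ext i; simp) fun _ _ => rfl

lemma degreeSum_add_two_eq_of_isTree (hG : G.IsTree) : degreeSum G n + 2 = 2 * n := by
  have hcard := hG.card_edgeFinset
  rw [Fintype.card_fin] at hcard
  rw [degreeSum_self]
  omega

end InitSeg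

/-! ### The energy as a combination of cuts -/

lemma quadForm_eq_sum_lt {V : Type*} [Fintype V] [LinearOrder V] (G : SimpleGraph V) (f : V → ℝ) :
    quadForm G f = ∑ e : V × V with e.1 < e.2 ∧ G.Adj e.1 e.2, (f e.1 - f e.2) ^ 2 := by
  have hsplit : ∑ v, ∑ w ∈ G.neighborFinset v, (f v - f w) ^ 2 =
      ∑ e : V × V with G.Adj e.1 e.2, (f e.1 - f e.2) ^ 2 := by
    simp only [G.neighborFinset_eq_filter, sum_filter, ← univ_product_univ, sum_product]
  have hswap : ∑ e : V × V with e.2 < e.1 ∧ G.Adj e.1 e.2, (f e.1 - f e.2) ^ 2 =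
      ∑ e : V × V with e.1 < e.2 ∧ G.Adj e.1 e.2, (f e.1 - f e.2) ^ 2 :=
    sum_nbij' Prod.swap Prod.swap (by simp [G.adj_comm]) (by simp [G.adj_comm]) (by simp)
      (by simp) fun e _ => by rw [Prod.fst_swap, Prod.snd_swap, sub_sq_comm]
  have hgt : ∀ e : V × V, G.Adj e.1 e.2 ∧ ¬e.1 < e.2 ↔ e.2 < e.1 ∧ G.Adj e.1 e.2 :=
    fun e => ⟨fun h => ⟨(not_lt.mp h.2).lt_of_ne' h.1.ne, h.1⟩, fun h => ⟨h.2, h.1.not_gt⟩⟩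
  rw [quadForm, hsplit, ← sum_filter_add_sum_filter_not _ (fun e => e.1 < e.2), filter_filter,
    filter_filter, filter_congr fun e _ => hgt e, filter_congr fun e _ => and_comm, hswap,
    add_self_div_two]

lemma sub_eq_sum_range_ite (F : ℕ → ℝ) {i j n : ℕ} (hij : i ≤ j) (hjn : j ≤ n) :
    F i - F j = ∑ a ∈ range n, if i ≤ a ∧ a < j then F a - F (a + 1) else 0 := by
  have hIco : {a ∈ range n | i ≤ a ∧ a < j} = Ico i j := by
    ext a
    simp only [mem_filter, mem_range, mem_Ico]
    omega
  rw [← sum_filter, hIco, sum_Ico_eq_sub _ hij, sum_range_sub', sum_range_sub',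
    sub_sub_sub_cancel_left]

variable {n : ℕ}

lemma card_separated_edges (G : SimpleGraph (Fin n)) (a b : ℕ) :
    #{e : Fin n × Fin n | (e.1 < e.2 ∧ G.Adj e.1 e.2) ∧
        (e.1.val ≤ a ∧ a < e.2.val) ∧ (e.1.val ≤ b ∧ b < e.2.val)} =
      cut G (min a b + 1) (max a b + 1) := by
  refine congrArg card (ext fun ⟨i, j⟩ => ?_)
  simp only [mem_filter, mem_univ, true_and, G.mk_mem_interedges_iff, mem_compl, mem_initSeg,
    Fin.lt_def]
  constructor
  · rintro ⟨⟨-, hij⟩, _, _⟩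
    exact ⟨by omega, by omega, hij⟩
  · rintro ⟨_, _, hij⟩
    exact ⟨⟨by omega, hij⟩, by omega, by omega⟩

/-- Layer-cake decomposition: `F i - F j` is the sum of the increments of `F` separating `i`
from `j`. -/
lemma quadForm_eq_sum_cut (G : SimpleGraph (Fin n)) (F : ℕ → ℝ) :
    quadForm G (fun i => F i) = ∑ a ∈ range n, ∑ b ∈ range n,
      (F a - F (a + 1)) * (F b - F (b + 1)) * cut G (min a b + 1) (max a b + 1) := by
  have hsq : ∀ e : Fin n × Fin n, e.1 < e.2 ∧ G.Adj e.1 e.2 → (F e.1 - F e.2) ^ 2 =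
      ∑ a ∈ range n, ∑ b ∈ range n, (F a - F (a + 1)) * (F b - F (b + 1)) *
        if (e.1.val ≤ a ∧ a < e.2.val) ∧ (e.1.val ≤ b ∧ b < e.2.val) then 1 else 0 := by
    intro e he
    rw [sub_eq_sum_range_ite F he.1.le e.2.isLt.le, sq, sum_mul_sum]
    refine sum_congr rfl fun a _ => sum_congr rfl fun b _ => ?_
    split_ifs <;> simp_all
  rw [quadForm_eq_sum_lt, sum_congr rfl fun e he => hsq e (mem_filter.mp he).2, sum_comm]
  refine sum_congr rfl fun a _ => ?_
  rw [sum_comm]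
  refine sum_congr rfl fun b _ => ?_
  rw [← mul_sum, sum_boole, filter_filter, card_separated_edges]

/-! ### Spiral trees -/

section Spiral

variable {n : ℕ} {H H' : SimpleGraph (Fin n)} {p p' : ℕ → ℕ} {a b j : ℕ}

/-- The natural order of `Fin n` enumerates `H` breadth first: `H` is the tree with root `0` in
which the parent of `j > 0` is `p j < j`, and `p` is monotone. The values `p 0` and `p j` for
`n ≤ j` are irrelevant. -/
structure IsSpiral (H : SimpleGraph (Fin n)) (p : ℕ → ℕ) : Prop where
  lt : ∀ j, 0 < j → j < n → p j < j
  mono : ∀ i j, 0 < i → i ≤ j → j < n → p i ≤ p j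
  adj_iff : ∀ i j : Fin n, H.Adj i j ↔ (0 < j.val ∧ p j = i.val) ∨ (0 < i.val ∧ p i = j.val)

lemma exists_isSpiral (hex : ∀ j : Fin n, 0 < j.val → ∃ i, i < j ∧ H.Adj i j)
    (hmono : ∀ i j i' j', i < j → H.Adj i j → i' < j' → H.Adj i' j' → j ≤ j' → i ≤ i') :
    ∃ p, IsSpiral H p := by
  choose q hq using hex
  let p : ℕ → ℕ := fun j => if h : 0 < j ∧ j < n then q ⟨j, h.2⟩ h.1 else 0
  have hp : ∀ (j : Fin n) (hj : 0 < j.val), p j = q j hj := fun j hj => dif_pos ⟨hj, j.isLt⟩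
  have hpar : ∀ i j : Fin n, i < j → H.Adj i j → p j = i := by
    intro i j hij hadj
    have hj : 0 < j.val := (Nat.zero_le _).trans_lt hij
    rw [hp j hj]
    exact congrArg Fin.val <| (hmono _ j _ j (hq j hj).1 (hq j hj).2 hij hadj le_rfl).antisymm
      (hmono _ j _ j hij hadj (hq j hj).1 (hq j hj).2 le_rfl)
  refine ⟨p, fun j hj hjn => ?_, fun i j hi hij hj => ?_, fun i j => ⟨fun hadj => ?_, ?_⟩⟩
  · exact (hp ⟨j, hjn⟩ hj).trans_lt (hq _ hj).1
  · have hj0 := hi.trans_le hij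
    rw [hp ⟨i, hij.trans_lt hj⟩ hi, hp ⟨j, hj⟩ hj0]
    exact hmono _ _ _ _ (hq _ hi).1 (hq _ hi).2 (hq _ hj0).1 (hq _ hj0).2 hij
  · rcases lt_or_gt_of_ne hadj.ne with h | h
    · exact Or.inl ⟨(Nat.zero_le _).trans_lt h, hpar i j h hadj⟩
    · exact Or.inr ⟨(Nat.zero_le _).trans_lt h, hpar j i h hadj.symm⟩
  · rintro (⟨hj, h⟩ | ⟨hi, h⟩)
    · rw [hp j hj, Fin.val_inj] at h
      exact h ▸ (hq j hj).2
    · rw [hp i hi, Fin.val_inj] at h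
      exact h ▸ (hq i hi).2.symm

/-- In a spiral tree the root and the children of the first `a` vertices form an initial segment;
this is its length. -/
def childBound (n : ℕ) (p : ℕ → ℕ) (a : ℕ) : ℕ := sInf {T | T = n ∨ 0 < T ∧ a ≤ p T}

lemma childBound_le : childBound n p a ≤ n := Nat.sInf_le (Or.inl rfl)

lemma one_le_childBound (hn : 0 < n) : 1 ≤ childBound n p a := by
  rcases Nat.sInf_mem (s := {T | T = n ∨ 0 < T ∧ a ≤ p T}) ⟨n, Or.inl rfl⟩ with h | h
  · exact hn.trans_eq h.symm
  · exact h.1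

lemma childBound_zero (hn : 0 < n) : childBound n p 0 = 1 := by
  refine (one_le_childBound hn).antisymm' (Nat.sInf_le ?_)
  exact Or.inr ⟨one_pos, Nat.zero_le _⟩

namespace IsSpiral

lemma lt_childBound_iff (hs : IsSpiral H p) (hj : 0 < j) (hjn : j < n) :
    j < childBound n p a ↔ p j < a := by
  constructor
  · intro h
    by_contra! hle
    exact Nat.notMem_of_lt_sInf h (Or.inr ⟨hj, hle⟩)
  · intro h
    by_contra! hle
    rcases Nat.sInf_mem (s := {T | T = n ∨ 0 < T ∧ a ≤ p T}) ⟨n, Or.inl rfl⟩ with hT | ⟨hT, hTa⟩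
    · exact (hle.trans_lt hjn).ne hT
    · exact ((hs.mono _ j hT hle hjn).trans_lt h).not_ge hTa

lemma childBound_eq (hs : IsSpiral H p) {T : ℕ} (hT : 1 ≤ T) (hTn : T ≤ n)
    (h : ∀ j, 0 < j → j < n → (p j < a ↔ j < T)) : childBound n p a = T := by
  have hle := childBound_le (n := n) (p := p) (a := a)
  have hone := one_le_childBound (p := p) (a := a) (hT.trans hTn)
  rcases lt_trichotomy (childBound n p a) T with hlt | heq | hgt
  · have h₁ := hs.lt_childBound_iff (a := a) hone (hlt.trans_le hTn)
    rw [h _ hone (hlt.trans_le hTn)] at h₁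
    omega
  · exact heq
  · have h₁ := hs.lt_childBound_iff (a := a) hT (hgt.trans_le hle)
    rw [h _ hT (hgt.trans_le hle)] at h₁
    omega

lemma lt_childBound_self (hs : IsSpiral H p) (han : a < n) : a < childBound n p a := by
  rcases Nat.eq_zero_or_pos a with rfl | ha
  · exact one_le_childBound han
  · exact (hs.lt_childBound_iff ha han).mpr (hs.lt a ha han)

lemma childBound_mono (hs : IsSpiral H p) (hn : 0 < n) (hab : a ≤ b) :
    childBound n p a ≤ childBound n p b := by
  by_contra! h
  have hpos := one_le_childBound (p := p) (a := b) hn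
  have hlt := h.trans_le childBound_le
  have h₁ := (hs.lt_childBound_iff hpos hlt).mp h
  exact ((hs.lt_childBound_iff hpos hlt).mpr (h₁.trans_le hab)).false

lemma map_neighborFinset (hs : IsSpiral H p) (i : Fin n) :
    (H.neighborFinset i).map Fin.valEmbedding =
      (if i.val = 0 then ∅ else {p i}) ∪ Ico (childBound n p i) (childBound n p (i + 1)) := by
  have hn : 0 < n := i.pos
  ext j
  simp only [mem_map, H.mem_neighborFinset, Fin.valEmbedding_apply, mem_union, mem_Ico]
  have hle := childBound_le (n := n) (p := p) (a := i + 1)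
  have hone := one_le_childBound (p := p) (a := i) hn
  constructor
  · rintro ⟨j, hij, rfl⟩
    rcases (hs.adj_iff i j).mp hij with ⟨hj, h⟩ | ⟨hi, h⟩
    · rw [← not_lt, hs.lt_childBound_iff hj j.isLt, hs.lt_childBound_iff hj j.isLt]
      omega
    · simp [hi.ne', h]
  · rintro (h | ⟨h₁, h₂⟩)
    · split_ifs at h with hi
      · simp at h
      · rw [mem_singleton] at h
        have := hs.lt i (by omega) i.isLt
        exact ⟨⟨j, by omega⟩, (hs.adj_iff _ _).mpr (Or.inr ⟨by omega, h.symm⟩), rfl⟩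
    · have hj : 0 < j := hone.trans h₁
      have hjn : j < n := h₂.trans_le hle
      rw [← not_lt, hs.lt_childBound_iff hj hjn] at h₁
      rw [hs.lt_childBound_iff hj hjn] at h₂
      exact ⟨⟨j, hjn⟩, (hs.adj_iff _ _).mpr (Or.inl ⟨hj, by simp only; omega⟩), rfl⟩

lemma sum_neighborFinset {M : Type*} [AddCommMonoid M] (hs : IsSpiral H p) (F : ℕ → M)
    (i : Fin n) :
    ∑ j ∈ H.neighborFinset i, F j = (if i.val = 0 then 0 else F (p i)) +
      ∑ j ∈ Ico (childBound n p i) (childBound n p (i + 1)), F j := by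
  have hdisj : Disjoint (if i.val = 0 then ∅ else {p i})
      (Ico (childBound n p i) (childBound n p (i + 1))) := by
    split_ifs with hi
    · exact disjoint_empty_left _
    · have := hs.lt i (by omega) i.isLt
      have := hs.lt_childBound_self i.isLt
      rw [disjoint_singleton_left, mem_Ico]
      omega
  have hmap := sum_map (H.neighborFinset i) Fin.valEmbedding F
  rw [hs.map_neighborFinset, sum_union hdisj] at hmap
  simp only [Fin.valEmbedding_apply] at hmap
  rw [← hmap]
  split_ifs <;> simp

lemma degree_eq (hs : IsSpiral H p) (i : Fin n) :
    H.degree i = (if i.val = 0 then 0 else 1) + (childBound n p (i + 1) - childBound n p i) := by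
  rw [← H.card_neighborFinset_eq_degree, card_eq_sum_ones, hs.sum_neighborFinset fun _ => 1,
    sum_const, smul_eq_mul, mul_one, Nat.card_Ico]

lemma degreeSum_add_two (hs : IsSpiral H p) (ha : 1 ≤ a) (han : a ≤ n) :
    degreeSum H a + 2 = childBound n p a + a := by
  induction a, ha using Nat.le_induction with
  | base =>
    have h₁ := hs.degree_eq ⟨0, han⟩
    have h₂ := degreeSum_succ H ⟨0, han⟩
    have h₃ : degreeSum H 0 = 0 := by simp [degreeSum, initSeg]
    have h₄ := one_le_childBound (n := n) (p := p) (a := 1) han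
    rw [h₁] at h₂
    simp only [zero_add, if_true, childBound_zero han, h₃] at h₂
    omega
  | succ a ha ih =>
    have h₁ := hs.degree_eq ⟨a, han⟩
    have h₂ := degreeSum_succ H ⟨a, han⟩
    have h₃ := hs.childBound_mono (by omega) (Nat.le_succ a)
    have h₄ := ih (by omega)
    rw [h₁] at h₂
    simp only [Nat.succ_eq_add_one] at *
    rw [if_neg (by omega)] at h₂
    omega

lemma mem_interedges_initSeg (hs : IsSpiral H p) (hab : a ≤ b) {i j : Fin n} :
    (i, j) ∈ H.interedges (initSeg n a) (initSeg n b)ᶜ ↔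
      i.val = p j ∧ 0 < j.val ∧ b ≤ j ∧ j < childBound n p a := by
  have hi := hs.lt i
  have hj := hs.lt j
  have hT := hs.lt_childBound_iff (j := j) (a := a)
  rw [SimpleGraph.mk_mem_interedges_iff, hs.adj_iff, mem_compl, mem_initSeg, mem_initSeg]
  omega

lemma cut_eq (hs : IsSpiral H p) (ha : 1 ≤ a) (hab : a ≤ b) :
    cut H a b = childBound n p a - b := by
  rw [← Nat.card_Ico]
  refine card_nbij (fun e => e.2.val) ?_ ?_ ?_
  · rintro ⟨i, j⟩ h
    exact mem_Ico.mpr ((hs.mem_interedges_initSeg hab).mp h).2.2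
  · rintro ⟨i, j⟩ h ⟨i', j'⟩ h' hjj
    have hi := ((hs.mem_interedges_initSeg hab).mp h).1
    have hi' := ((hs.mem_interedges_initSeg hab).mp h').1
    obtain rfl : j = j' := Fin.ext hjj
    exact Prod.ext (Fin.ext (hi.trans hi'.symm)) rfl
  · intro j hj
    rw [mem_coe, mem_Ico] at hj
    have hjn : j < n := hj.2.trans_le childBound_le
    have hj0 : 0 < j := by omega
    exact ⟨(⟨p j, (hs.lt j hj0 hjn).trans hjn⟩, ⟨j, hjn⟩),
      (hs.mem_interedges_initSeg hab).mpr ⟨rfl, hj0, hj⟩, rfl⟩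

lemma cut_eq_degreeSum (hs : IsSpiral H p) (ha : 1 ≤ a) (hab : a ≤ b) (hb : b ≤ n) :
    cut H a b = degreeSum H a + 2 - (a + b) := by
  have := hs.degreeSum_add_two ha (hab.trans hb)
  rw [hs.cut_eq ha hab]
  omega

lemma unique (hs : IsSpiral H p) (hs' : IsSpiral H' p') (hd : ∀ i, H.degree i = H'.degree i) :
    H = H' := by
  have hbound : ∀ a, 1 ≤ a → a ≤ n → childBound n p a = childBound n p' a := by
    intro a ha han
    have h₁ := hs.degreeSum_add_two ha han
    have h₂ := hs'.degreeSum_add_two ha han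
    rw [degreeSum, sum_congr rfl fun i _ => hd i] at h₁
    rw [degreeSum] at h₂
    omega
  have hlt : ∀ j, 0 < j → j < n → ∀ a, 1 ≤ a → a ≤ n → (p j < a ↔ p' j < a) := by
    intro j hj hjn a ha han
    rw [← hs.lt_childBound_iff hj hjn, hbound a ha han, hs'.lt_childBound_iff hj hjn]
  have hp : ∀ j, 0 < j → j < n → p j = p' j := by
    intro j hj hjn
    have h₁ := hs.lt j hj hjn
    have h₂ := hs'.lt j hj hjn
    have h₃ := hlt j hj hjn (p j + 1) (by omega) (by omega)
    have h₄ := hlt j hj hjn (p' j + 1) (by omega) (by omega)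
    omega
  ext i j
  have hi := hp i
  have hj := hp j
  rw [hs.adj_iff, hs'.adj_iff]
  omega

end IsSpiral

/-- The depth of `j` in the rooted tree with parent function `p`. -/
def depth (p : ℕ → ℕ) (j : ℕ) : ℕ := if _h : p j < j then depth p (p j) + 1 else 0
termination_by j

lemma depth_zero (p : ℕ → ℕ) : depth p 0 = 0 := by
  rw [depth, dif_neg (Nat.not_lt_zero _)]

namespace IsSpiral

lemma depth_eq (hs : IsSpiral H p) (hj : 0 < j) (hjn : j < n) :
    depth p j = depth p (p j) + 1 := by
  rw [depth, dif_pos (hs.lt j hj hjn)]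

lemma depth_mono (hs : IsSpiral H p) {i : ℕ} (hij : i ≤ j) (hjn : j < n) :
    depth p i ≤ depth p j := by
  induction j using Nat.strong_induction_on generalizing i with
  | _ j ih =>
    rcases Nat.eq_zero_or_pos i with rfl | hi
    · exact (depth_zero p).trans_le (Nat.zero_le _)
    · have hlt := hs.lt j (hi.trans_le hij) hjn
      rw [hs.depth_eq hi (hij.trans_lt hjn), hs.depth_eq (hi.trans_le hij) hjn]
      exact Nat.succ_le_succ (ih _ hlt (hs.mono i j hi hij hjn) (hlt.trans hjn))

lemma exists_walk (hs : IsSpiral H p) (hn : 0 < n) (hj : j < n) :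
    ∃ w : H.Walk ⟨0, hn⟩ ⟨j, hj⟩, w.length = depth p j := by
  induction j using Nat.strong_induction_on with
  | _ j ih =>
    rcases Nat.eq_zero_or_pos j with rfl | hj0
    · exact ⟨.nil, (depth_zero p).symm⟩
    · have hlt := hs.lt j hj0 hj
      obtain ⟨w, hw⟩ := ih (p j) hlt (hlt.trans hj)
      have hadj : H.Adj ⟨p j, hlt.trans hj⟩ ⟨j, hj⟩ := (hs.adj_iff _ _).mpr (Or.inl ⟨hj0, rfl⟩)
      exact ⟨w.concat hadj, by rw [SimpleGraph.Walk.length_concat, hw, hs.depth_eq hj0 hj]⟩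

lemma connected (hs : IsSpiral H p) (hn : 0 < n) : H.Connected :=
  SimpleGraph.connected_iff_exists_forall_reachable _ |>.mpr
    ⟨⟨0, hn⟩, fun v => ⟨(hs.exists_walk hn v.isLt).choose⟩⟩

lemma depth_le_add_length (hs : IsSpiral H p) {u v : Fin n} (w : H.Walk u v) :
    depth p v ≤ depth p u + w.length := by
  induction w with
  | nil => exact Nat.le_add_right _ _
  | @cons u x v hux w ih =>
    rw [SimpleGraph.Walk.length_cons]
    rcases (hs.adj_iff u x).mp hux with ⟨hx, h⟩ | ⟨hu, h⟩
    · rw [hs.depth_eq hx x.isLt, h] at ih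
      omega
    · rw [hs.depth_eq hu u.isLt, h]
      omega

lemma dist_eq (hs : IsSpiral H p) (hn : 0 < n) (j : Fin n) : H.dist ⟨0, hn⟩ j = depth p j := by
  obtain ⟨w, hw⟩ := hs.exists_walk hn j.isLt
  refine le_antisymm (hw ▸ SimpleGraph.dist_le w) ?_
  obtain ⟨w', hw'⟩ := (hs.connected hn).exists_walk_length_eq_dist ⟨0, hn⟩ j
  simpa [hw', depth_zero] using hs.depth_le_add_length w'

lemma isTree (hs : IsSpiral H p) (hn : 0 < n) : H.IsTree := by
  rw [SimpleGraph.isTree_iff_connected_and_card]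
  refine ⟨hs.connected hn, ?_⟩
  have hbound : childBound n p n = n :=
    hs.childBound_eq hn le_rfl fun j hj hjn =>
      iff_of_true ((hs.lt j hj hjn).trans hjn) hjn
  have hsum := hs.degreeSum_add_two hn le_rfl
  rw [degreeSum_self, hbound] at hsum
  rw [Nat.card_eq_fintype_card, Nat.card_eq_fintype_card, Fintype.card_fin,
    ← SimpleGraph.edgeFinset_card]
  omega

lemma eq_of_isChild (hs : IsSpiral H p) (hn : 0 < n) {v w : Fin n}
    (h : IsChild H ⟨0, hn⟩ v w) : 0 < w.val ∧ p w = v := by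
  obtain ⟨hadj, hdist⟩ := h
  rw [hs.dist_eq, hs.dist_eq] at hdist
  rcases (hs.adj_iff v w).mp hadj with h | ⟨hv, h⟩
  · exact h
  · rw [hs.depth_eq hv v.isLt, h] at hdist
    omega

lemma isSLOStarOrdering (hs : IsSpiral H p) (hn : 0 < n)
    (hb : ∀ i j : Fin n, i < j → IsBoundary H i → IsBoundary H j)
    (hd : ∀ i j : Fin n, i < j → IsInterior H i → IsInterior H j → H.degree i ≤ H.degree j) :
    IsSLOStarOrdering H ⟨0, hn⟩ (· < ·) := by
  refine ⟨⟨inferInstance, fun v w hvw => ?_, fun v₁ v₂ w₁ w₂ hlt h₁ h₂ => ?_, hb⟩, hd⟩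
  · rw [hs.dist_eq, hs.dist_eq]
    exact hs.depth_mono hvw.le w.isLt
  · by_contra! hle
    obtain ⟨-, h₁⟩ := hs.eq_of_isChild hn h₁
    obtain ⟨hw₂, h₂⟩ := hs.eq_of_isChild hn h₂
    have hmono := hs.mono w₂ w₁ hw₂ hle w₁.isLt
    rw [h₁, h₂] at hmono
    exact (hlt.trans_le hmono).false

end IsSpiral

end Spiral

section Comparison

variable {n : ℕ} {S H : SimpleGraph (Fin n)} {p : ℕ → ℕ} {F : ℕ → ℝ} {a b : ℕ}

namespace IsSpiral

lemma cut_le (hs : IsSpiral S p) (hH : H.IsAcyclic) (ha : 1 ≤ a) (hab : a ≤ b) (hb : b ≤ n)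
    (hD : degreeSum S a ≤ degreeSum H a) : cut S a b ≤ cut H a b := by
  have := degreeSum_add_two_le hH ha hab hb
  rw [hs.cut_eq_degreeSum ha hab hb]
  omega

lemma mul_cut_le (hs : IsSpiral S p) (hH : H.IsAcyclic)
    (hD : ∀ a ≤ n, degreeSum S a ≤ degreeSum H a) (hF : Antitone F) (ha : a < n) (hb : b < n) :
    (F a - F (a + 1)) * (F b - F (b + 1)) * cut S (min a b + 1) (max a b + 1) ≤
      (F a - F (a + 1)) * (F b - F (b + 1)) * cut H (min a b + 1) (max a b + 1) := by
  refine mul_le_mul_of_nonneg_left (Nat.cast_le.mpr ?_)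
    (mul_nonneg (sub_nonneg.mpr (hF a.le_succ)) (sub_nonneg.mpr (hF b.le_succ)))
  exact hs.cut_le hH (by omega) (by omega) (by omega) (hD _ (by omega))

lemma quadForm_le (hs : IsSpiral S p) (hH : H.IsAcyclic)
    (hD : ∀ a ≤ n, degreeSum S a ≤ degreeSum H a) (hF : Antitone F) :
    quadForm S (fun i => F i) ≤ quadForm H (fun i => F i) := by
  rw [quadForm_eq_sum_cut, quadForm_eq_sum_cut]
  exact sum_le_sum fun a ha => sum_le_sum fun b hb =>
    hs.mul_cut_le hH hD hF (mem_range.mp ha) (mem_range.mp hb)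

lemma cut_eq_of_quadForm_eq (hs : IsSpiral S p) (hH : H.IsAcyclic)
    (hD : ∀ a ≤ n, degreeSum S a ≤ degreeSum H a) (hF : Antitone F)
    (hq : quadForm S (fun i => F i) = quadForm H (fun i => F i)) (hab : a ≤ b) (hb : b < n)
    (hFa : F (a + 1) < F a) (hFb : F (b + 1) < F b) :
    cut S (a + 1) (b + 1) = cut H (a + 1) (b + 1) := by
  have hle : ∀ a ∈ range n, ∀ b ∈ range n, _ := fun a ha b hb =>
    hs.mul_cut_le hH hD hF (mem_range.mp ha) (mem_range.mp hb)
  rw [quadForm_eq_sum_cut, quadForm_eq_sum_cut,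
    sum_eq_sum_iff_of_le fun a ha => sum_le_sum (hle a ha)] at hq
  have ha := mem_range.mpr (hab.trans_lt hb)
  have hmul := (sum_eq_sum_iff_of_le (hle a ha)).mp (hq a ha) b (mem_range.mpr hb)
  rw [min_eq_left hab, max_eq_right hab] at hmul
  exact Nat.cast_injective <| mul_left_cancel₀
    (mul_pos (sub_pos.mpr hFa) (sub_pos.mpr hFb)).ne' hmul

lemma degreeSum_eq_of_cut_eq (hs : IsSpiral S p) (hH : H.IsAcyclic) (ha : 1 ≤ a) (han : a < n)
    (hD : degreeSum S a ≤ degreeSum H a) (h : cut S a a = cut H a a) :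
    degreeSum H a = degreeSum S a := by
  have h₁ := degreeSum_add_two_le hH ha le_rfl han.le
  have h₂ := hs.degreeSum_add_two ha han.le
  have h₃ := hs.lt_childBound_self han
  rw [hs.cut_eq ha le_rfl] at h
  omega

end IsSpiral

end Comparison

/-! ### The extremal tree -/

section OptTree

variable {n k d a i j : ℕ} {H : SimpleGraph (Fin n)}

/-- The parameters for which there is a tree with `n` vertices of which `k` are interior, with all
interior degrees at least `d`. -/
structure Admissible (n k d : ℕ) : Prop where
  one_le : 1 ≤ k
  two_le : 2 ≤ d
  le : 2 + k * (d - 1) ≤ n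

/-- If the root of a spiral tree has degree `d` and its next vertices have `d - 1` children each,
then the first child of vertex `a > 0` is `firstChild d a`. For the root this is the second
child. -/
def firstChild (d a : ℕ) : ℕ := 2 + a * (d - 1)

lemma firstChild_succ (d a : ℕ) : firstChild d (a + 1) = firstChild d a + (d - 1) := by
  rw [firstChild, firstChild, Nat.succ_mul, add_assoc]

lemma firstChild_mono (d : ℕ) : Monotone (firstChild d) := fun _ _ h =>
  Nat.add_le_add_left (Nat.mul_le_mul_right _ h) _

lemma add_two_le_firstChild (hd : 2 ≤ d) (a : ℕ) : a + 2 ≤ firstChild d a := by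
  have := Nat.le_mul_of_pos_right a (show 0 < d - 1 by omega)
  rw [firstChild]
  omega

lemma mul_add_two_eq_firstChild_add (hd : 2 ≤ d) (a : ℕ) : a * d + 2 = firstChild d a + a := by
  obtain ⟨d, rfl⟩ := Nat.exists_eq_add_of_le' hd
  rw [firstChild, Nat.add_sub_assoc (by norm_num)]
  ring

namespace Admissible

lemma firstChild_le (h : Admissible n k d) (ha : a ≤ k) : firstChild d a ≤ n :=
  (firstChild_mono d ha).trans h.le

lemma add_two_le (h : Admissible n k d) : k + 2 ≤ n :=
  (add_two_le_firstChild h.two_le k).trans h.le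

end Admissible

/-- The parent of vertex `j > 0` in the spiral tree with interior degrees `d, …, d, d°`: the last
interior vertex `k - 1` takes all the children which are left over by its predecessors. -/
def optParent (k d j : ℕ) : ℕ := min ((j - 2) / (d - 1)) (k - 1)

lemma optParent_lt (k d : ℕ) (hj : 0 < j) : optParent k d j < j := by
  have := Nat.div_le_self (j - 2) (d - 1)
  rw [optParent]
  omega

lemma optParent_lt_iff (hd : 2 ≤ d) (ha : 1 ≤ a) (hak : a < k) :
    optParent k d j < a ↔ j < firstChild d a := by
  have h : optParent k d j < a ↔ (j - 2) / (d - 1) < a := by rw [optParent]; omega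
  have := add_two_le_firstChild hd a
  rw [h, Nat.div_lt_iff_lt_mul (by omega), firstChild] at *
  omega

/-- The extremal tree: the spiral tree with interior degrees `d, …, d, d°`. -/
def optTree (n k d : ℕ) : SimpleGraph (Fin n) where
  Adj i j := (0 < j.val ∧ optParent k d j = i.val) ∨ (0 < i.val ∧ optParent k d i = j.val)
  symm := ⟨fun _ _ h => h.symm⟩
  loopless := ⟨fun i h => by
    have := optParent_lt k d (j := i)
    omega⟩

lemma isSpiral_optTree (n k d : ℕ) : IsSpiral (optTree n k d) (optParent k d) where
  lt _ hj _ := optParent_lt k d hj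
  mono _ _ _ hij _ := min_le_min_right _ (Nat.div_le_div_right (Nat.sub_le_sub_right hij 2))
  adj_iff _ _ := Iff.rfl

namespace Admissible

lemma childBound_eq_firstChild (h : Admissible n k d) (ha : 1 ≤ a) (hak : a < k) :
    childBound n (optParent k d) a = firstChild d a :=
  (isSpiral_optTree n k d).childBound_eq (by rw [firstChild]; omega) (h.firstChild_le hak.le)
    fun _ _ _ => optParent_lt_iff h.two_le ha hak

lemma childBound_eq_of_le (h : Admissible n k d) (hak : k ≤ a) :
    childBound n (optParent k d) a = n := by
  have hk := h.one_le
  have hn := h.add_two_le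
  refine (isSpiral_optTree n k d).childBound_eq (by omega) le_rfl fun j _ hj => ?_
  exact iff_of_true ((min_le_right _ _).trans_lt (by omega)) hj

lemma degree_eq_of_lt (h : Admissible n k d) {i : Fin n} (hi : i.val + 1 < k) :
    (optTree n k d).degree i = d := by
  have hd := h.two_le
  have hsucc := firstChild_succ d i
  rw [(isSpiral_optTree n k d).degree_eq, h.childBound_eq_firstChild (Nat.le_add_left 1 _) hi]
  split_ifs with h0
  · rw [h0, childBound_zero (by omega), firstChild]
    omega
  · rw [h.childBound_eq_firstChild (by omega) (by omega)]
    omega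

lemma le_degree_of_add_one_eq (h : Admissible n k d) {i : Fin n} (hi : i.val + 1 = k) :
    d ≤ (optTree n k d).degree i := by
  have hd := h.two_le
  have hle := h.firstChild_le hi.le
  rw [firstChild_succ] at hle
  rw [(isSpiral_optTree n k d).degree_eq, h.childBound_eq_of_le hi.ge]
  split_ifs with h0
  · rw [h0, firstChild] at hle
    rw [h0, childBound_zero (by omega)]
    omega
  · rw [h.childBound_eq_firstChild (by omega) (by omega)]
    omega

lemma degree_eq_one_of_le (h : Admissible n k d) {i : Fin n} (hi : k ≤ i.val) :
    (optTree n k d).degree i = 1 := by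
  have hk := h.one_le
  rw [(isSpiral_optTree n k d).degree_eq, h.childBound_eq_of_le hi,
    h.childBound_eq_of_le (by omega), if_neg (by omega), Nat.sub_self]

end Admissible

/-- The vertices of the tree `H` are numbered with the `k` interior vertices, all of degree at
least `d`, first. -/
structure SortedTree (k d : ℕ) (H : SimpleGraph (Fin n)) : Prop where
  isTree : H.IsTree
  le_degree : ∀ i : Fin n, i.val < k → d ≤ H.degree i
  degree_eq_one : ∀ i : Fin n, k ≤ i.val → H.degree i = 1

lemma Admissible.sortedTree_optTree (h : Admissible n k d) : SortedTree k d (optTree n k d) where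
  isTree := (isSpiral_optTree n k d).isTree (by have := h.add_two_le; omega)
  le_degree i hi := by
    rcases Nat.lt_or_eq_of_le (Nat.succ_le_of_lt hi) with hi | hi
    · exact (h.degree_eq_of_lt hi).ge
    · exact h.le_degree_of_add_one_eq hi
  degree_eq_one _ hi := h.degree_eq_one_of_le hi

namespace SortedTree

lemma mul_le_degreeSum (hH : SortedTree k d H) (hkn : k ≤ n) (ha : a ≤ k) :
    a * d ≤ degreeSum H a := by
  rw [degreeSum, ← smul_eq_mul]
  nth_rewrite 1 [← card_initSeg (ha.trans hkn)]
  exact card_nsmul_le_sum _ _ _ fun i hi => hH.le_degree i ((mem_initSeg.mp hi).trans_le ha)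

lemma degreeSum_add_two (hH : SortedTree k d H) (hka : k ≤ a) (han : a ≤ n) :
    degreeSum H a + 2 = n + a := by
  induction han using Nat.decreasingInduction with
  | self => rw [degreeSum_add_two_eq_of_isTree hH.isTree, two_mul]
  | of_succ a han ih =>
    have hsucc := degreeSum_succ H ⟨a, han⟩
    rw [hH.degree_eq_one ⟨a, han⟩ hka] at hsucc
    have := ih (by omega)
    simp only at hsucc
    omega

lemma admissible (hH : SortedTree k d H) (hk : 1 ≤ k) (hkn : k ≤ n) (hd : 2 ≤ d) :
    Admissible n k d := by
  refine ⟨hk, hd, ?_⟩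
  have h₁ := hH.mul_le_degreeSum hkn le_rfl
  have h₂ := hH.degreeSum_add_two le_rfl hkn
  have h₃ := mul_add_two_eq_firstChild_add hd k
  rw [firstChild] at h₃
  omega

lemma isInterior_iff (hH : SortedTree k d H) (hd : 2 ≤ d) {i : Fin n} :
    IsInterior H i ↔ i.val < k := by
  rw [IsInterior]
  rcases Nat.lt_or_ge i k with hi | hi
  · have := hH.le_degree i hi
    omega
  · have := hH.degree_eq_one i hi
    omega

lemma isBoundary_iff (hH : SortedTree k d H) (hd : 2 ≤ d) {i : Fin n} :
    IsBoundary H i ↔ k ≤ i.val := by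
  rw [IsBoundary]
  rcases Nat.lt_or_ge i k with hi | hi
  · have := hH.le_degree i hi
    omega
  · exact iff_of_true (hH.degree_eq_one i hi) hi

lemma inClassTd (hH : SortedTree k d H) (h : Admissible n k d) : inClassTd k d H := by
  have hd := h.two_le
  have hn := h.add_two_le
  refine ⟨⟨hH.isTree, ⟨⟨0, by omega⟩, (hH.isInterior_iff hd).mpr h.one_le⟩,
    ⟨⟨k, by omega⟩, (hH.isBoundary_iff hd).mpr le_rfl⟩⟩, ?_,
    fun i hi => hH.le_degree i ((hH.isInterior_iff hd).mp hi)⟩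
  have hseg : interiorFinset H = initSeg n k := filter_congr fun i _ => hH.isInterior_iff hd
  rw [hseg, card_initSeg (by omega)]

lemma degreeSum_optTree_le (hH : SortedTree k d H) (h : Admissible n k d) (ha : a ≤ n) :
    degreeSum (optTree n k d) a ≤ degreeSum H a := by
  have hkn : k ≤ n := by have := h.add_two_le; omega
  rcases Nat.lt_or_ge a k with hak | hak
  · refine le_trans (Eq.le ?_) (hH.mul_le_degreeSum hkn hak.le)
    rw [degreeSum, sum_congr rfl fun i hi => h.degree_eq_of_lt ?_, sum_const, card_initSeg ha,
      smul_eq_mul]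
    rw [mem_initSeg] at hi
    omega
  · have h₁ := hH.degreeSum_add_two hak ha
    have h₂ := h.sortedTree_optTree.degreeSum_add_two hak ha
    omega

lemma degree_eq_optTree (hH : SortedTree k d H) (h : Admissible n k d)
    (hdeg : ∀ i : Fin n, i.val + 1 < k → H.degree i = d) (i : Fin n) :
    H.degree i = (optTree n k d).degree i := by
  rcases lt_trichotomy (i.val + 1) k with hi | hi | hi
  · rw [hdeg i hi, h.degree_eq_of_lt hi]
  · have hsum : degreeSum H i = degreeSum (optTree n k d) i := sum_congr rfl fun j hj => by
      rw [mem_initSeg] at hj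
      rw [hdeg j (by omega), h.degree_eq_of_lt (by omega)]
    have h₁ := hH.degreeSum_add_two hi.ge i.isLt
    have h₂ := h.sortedTree_optTree.degreeSum_add_two hi.ge i.isLt
    rw [degreeSum_succ] at h₁ h₂
    omega
  · rw [hH.degree_eq_one i (by omega), h.degree_eq_one_of_le (by omega)]

lemma eq_optTree_of_isSpiral {p : ℕ → ℕ} (hH : SortedTree k d H) (h : Admissible n k d)
    (hdeg : ∀ i : Fin n, i.val + 1 < k → H.degree i = d) (hp : IsSpiral H p) :
    H = optTree n k d :=
  hp.unique (isSpiral_optTree n k d) (hH.degree_eq_optTree h hdeg)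

end SortedTree

namespace Admissible

lemma inClassTd_optTree (h : Admissible n k d) : inClassTd k d (optTree n k d) :=
  h.sortedTree_optTree.inClassTd h

lemma isSLOStarTree_optTree (h : Admissible n k d) : IsSLOStarTree (optTree n k d) := by
  have hn : 0 < n := by have := h.le; omega
  refine ⟨h.inClassTd_optTree.1, ⟨0, hn⟩, (· < ·),
    (isSpiral_optTree n k d).isSLOStarOrdering hn (fun i j hij => ?_) fun i j hij _ hj => ?_⟩
  · simp only [h.sortedTree_optTree.isBoundary_iff h.two_le]
    exact fun hi => hi.trans hij.le
  · rw [h.sortedTree_optTree.isInterior_iff h.two_le] at hj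
    rw [h.degree_eq_of_lt (lt_of_le_of_lt (Nat.succ_le_of_lt hij) hj)]
    exact h.sortedTree_optTree.le_degree j hj

end Admissible

end OptTree

/-! ### Ties in the eigenfunction of the extremal tree -/

section Eigenfunction

variable {n k d : ℕ} {F : ℕ → ℝ} {μ : ℝ}

/-- `F`, restricted to `{0, …, n - 1}`, is a Dirichlet eigenfunction of the extremal tree that is
positive on the interior and decreasing in the numbering of the vertices. -/
structure IsAntitoneEigenfunction (n k d : ℕ) (μ : ℝ) (F : ℕ → ℝ) : Prop where
  antitone : Antitone F
  pos : ∀ i < k, 0 < F i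
  eq_zero : ∀ i, k ≤ i → F i = 0
  lapApply_eq : ∀ i : Fin n, i.val < k → lapApply (optTree n k d) (fun j => F j) i = μ * F i

namespace IsAntitoneEigenfunction

lemma sum_neighborFinset (h : Admissible n k d) (hF : IsAntitoneEigenfunction n k d μ F)
    (i : Fin n) (hi : i.val < k) :
    ∑ j ∈ (optTree n k d).neighborFinset i, F j =
      F (if i.val = 0 then 1 else optParent k d i) +
        ∑ t ∈ range (d - 1), F (firstChild d i + t) := by
  have hfc := add_two_le_firstChild h.two_le i
  rw [(isSpiral_optTree n k d).sum_neighborFinset F]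
  rcases Nat.lt_or_eq_of_le (Nat.succ_le_of_lt hi) with hi' | hi'
  · have hsub : firstChild d (i + 1) - firstChild d i = d - 1 := by
      rw [firstChild_succ, Nat.add_sub_cancel_left]
    have hle : firstChild d i ≤ firstChild d (i + 1) := firstChild_mono d (Nat.le_succ i)
    rw [← hsub, ← sum_Ico_eq_sum_range, h.childBound_eq_firstChild (Nat.le_add_left 1 _) hi']
    split_ifs with h0
    · rw [h0] at hfc hle ⊢
      rw [childBound_zero (by omega), sum_eq_sum_Ico_succ_bot (by omega), zero_add]
      simp [firstChild]
    · rw [h.childBound_eq_firstChild (by omega) hi]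
  · have hlt := (isSpiral_optTree n k d).lt_childBound_self i.isLt
    rw [sum_eq_zero fun j hj => hF.eq_zero j (by rw [mem_Ico] at hj; omega),
      sum_eq_zero fun t _ => hF.eq_zero _ (by omega)]
    split_ifs with h0
    · rw [hF.eq_zero 1 (by omega)]
    · rfl

lemma apply_optParent_le (hF : IsAntitoneEigenfunction n k d μ F) {a b : ℕ} (hab : a < b)
    (heq : F a = F b) :
    F (optParent k d b) ≤ F (if a = 0 then 1 else optParent k d a) := by
  split_ifs with h0
  · refine (hF.antitone (Nat.zero_le _)).trans ?_
    rw [← h0, heq]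
    exact hF.antitone (by omega)
  · exact hF.antitone (min_le_min_right _ (Nat.div_le_div_right (Nat.sub_le_sub_right hab.le 2)))

/-- The eigenvalue equations of `a` and `b` can only agree if `b` has the least possible degree and
each neighbour of `b` carries the same value as the corresponding neighbour of `a`. -/
lemma degree_eq_and_eq_of_eq (h : Admissible n k d) (hF : IsAntitoneEigenfunction n k d μ F)
    {a b : Fin n} (hab : a < b) (hb : b.val < k) (heq : F a = F b) :
    (optTree n k d).degree b = d ∧ F (firstChild d a) = F (firstChild d (b + 1) - 1) := by
  have hd := h.two_le
  have hab' : a.val < b.val := hab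
  have hparent := hF.apply_optParent_le hab' heq
  have hfc := firstChild_mono d (Nat.succ_le_of_lt hab')
  rw [Nat.succ_eq_add_one, firstChild_succ] at hfc
  have hterm : ∀ t ∈ range (d - 1), F (firstChild d b + t) ≤ F (firstChild d a + t) :=
    fun t _ => hF.antitone (by omega)
  have hea := hF.lapApply_eq a (by omega)
  have heb := hF.lapApply_eq b hb
  rw [lapApply, hF.sum_neighborFinset h a (by omega), h.degree_eq_of_lt (by omega), heq] at hea
  rw [lapApply, hF.sum_neighborFinset h b hb, if_neg (by omega)] at heb
  have hdeg : (d : ℝ) ≤ (optTree n k d).degree b :=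
    Nat.cast_le.mpr (h.sortedTree_optTree.le_degree b hb)
  have hmul := mul_le_mul_of_nonneg_right hdeg (hF.pos b hb).le
  have hsum := sum_le_sum hterm
  refine ⟨?_, ?_⟩
  · have : ((optTree n k d).degree b : ℝ) * F b = d * F b := by linarith
    exact_mod_cast mul_right_cancel₀ (hF.pos b hb).ne' this
  · have hall := (sum_eq_sum_iff_of_le hterm).mp (by linarith)
    have hfirst : F (firstChild d b) = F (firstChild d a) := hall 0 (mem_range.mpr (by omega))
    have hlast := hall (d - 2) (mem_range.mpr (by omega))
    have hidx : firstChild d (b + 1) - 1 = firstChild d b + (d - 2) := by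
      rw [firstChild_succ]; omega
    refine (hF.antitone (by rw [hidx]; omega)).antisymm' ?_
    rw [hidx, hlast, ← hfirst]
    exact hF.antitone (by omega)

end IsAntitoneEigenfunction

end Eigenfunction

/-! ### Isomorphisms -/

section Iso

variable {V W : Type*}

lemma dist_eq_of_iso {G : SimpleGraph V} {H : SimpleGraph W} (e : G ≃g H) (u v : V) :
    H.dist (e u) (e v) = G.dist u v := by
  rw [SimpleGraph.dist_eq_sInf, SimpleGraph.dist_eq_sInf]
  congr 1
  refine Set.Subset.antisymm ?_ ?_ <;> rintro _ ⟨w, rfl⟩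
  · refine ⟨(w.map e.symm.toHom).copy (e.symm_apply_apply u) (e.symm_apply_apply v), ?_⟩
    rw [SimpleGraph.Walk.length_copy, SimpleGraph.Walk.length_map]
  · exact ⟨w.map e.toHom, SimpleGraph.Walk.length_map _ _⟩

variable {G : SimpleGraph V} {H : SimpleGraph W}

lemma isChild_iff_of_iso (e : G ≃g H) {v₀ v w : V} :
    IsChild H (e v₀) (e v) (e w) ↔ IsChild G v₀ v w := by
  rw [IsChild, IsChild, e.map_adj_iff, dist_eq_of_iso, dist_eq_of_iso]

variable [Fintype V] [Fintype W]

lemma isInterior_iff_of_iso (e : G ≃g H) {v : V} : IsInterior H (e v) ↔ IsInterior G v := by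
  rw [IsInterior, IsInterior, e.degree_eq]

lemma isBoundary_iff_of_iso (e : G ≃g H) {v : V} : IsBoundary H (e v) ↔ IsBoundary G v := by
  rw [IsBoundary, IsBoundary, e.degree_eq]

lemma sum_neighborFinset_of_iso {M : Type*} [AddCommMonoid M] (e : G ≃g H) (f : W → M) (v : V) :
    ∑ w ∈ H.neighborFinset (e v), f w = ∑ w ∈ G.neighborFinset v, f (e w) :=
  (sum_equiv e.toEquiv (fun w => by simpa using e.map_adj_iff.symm) fun _ _ => rfl).symm

lemma lapApply_of_iso (e : G ≃g H) (f : W → ℝ) (v : V) :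
    lapApply H f (e v) = lapApply G (f ∘ e) v := by
  rw [lapApply, lapApply, e.degree_eq, sum_neighborFinset_of_iso e]
  rfl

lemma quadForm_of_iso (e : G ≃g H) (f : W → ℝ) : quadForm H f = quadForm G (f ∘ e) := by
  rw [quadForm, quadForm, ← Equiv.sum_comp e.toEquiv]
  congr 1
  exact sum_congr rfl fun v _ => sum_neighborFinset_of_iso e _ v

lemma IsDirichletEigenpair.comp_iso {μ : ℝ} {f : W → ℝ} (hf : IsDirichletEigenpair H μ f)
    (e : G ≃g H) : IsDirichletEigenpair G μ (f ∘ e) := by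
  refine ⟨fun h => hf.1 ?_, fun v hv => hf.2.1 _ ((isBoundary_iff_of_iso e).mpr hv), fun v hv => ?_⟩
  · simpa [funext_iff, e.surjective.forall] using h
  · rw [← lapApply_of_iso, hf.2.2 _ ((isInterior_iff_of_iso e).mpr hv), Function.comp_apply]

lemma dirichletLambda_eq_of_iso (e : G ≃g H) : dirichletLambda G = dirichletLambda H :=
  congrArg sInf <| Set.ext fun _ =>
    ⟨fun ⟨_, hf⟩ => ⟨_, hf.comp_iso e.symm⟩, fun ⟨_, hf⟩ => ⟨_, hf.comp_iso e⟩⟩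

lemma IsTreeWithBoundary.of_iso (hG : IsTreeWithBoundary G) (e : G ≃g H) :
    IsTreeWithBoundary H := by
  obtain ⟨hT, ⟨v, hv⟩, ⟨w, hw⟩⟩ := hG
  exact ⟨e.isTree_iff.mp hT, ⟨e v, (isInterior_iff_of_iso e).mpr hv⟩,
    ⟨e w, (isBoundary_iff_of_iso e).mpr hw⟩⟩

lemma sum_interiorFinset_of_iso {M : Type*} [AddCommMonoid M] (e : G ≃g H) (f : W → M) :
    ∑ w ∈ interiorFinset H, f w = ∑ v ∈ interiorFinset G, f (e v) :=
  (sum_equiv e.toEquiv (fun v => by simp [interiorFinset, isInterior_iff_of_iso e])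
    fun _ _ => rfl).symm

lemma inClassTd.of_iso {n k d : ℕ} {G H : SimpleGraph (Fin n)} (hG : inClassTd k d G)
    (e : G ≃g H) : inClassTd k d H := by
  obtain ⟨hT, hcard, hdeg⟩ := hG
  refine ⟨hT.of_iso e, ?_, e.surjective.forall.mpr fun v hv => ?_⟩
  · rw [← hcard, card_eq_sum_ones, sum_interiorFinset_of_iso e, card_eq_sum_ones]
  · rw [e.degree_eq]
    exact hdeg v ((isInterior_iff_of_iso e).mp hv)

lemma IsSLOStarOrdering.of_iso {v₀ : V} {r : V → V → Prop} {s : W → W → Prop}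
    (h : IsSLOStarOrdering G v₀ r) (e : G ≃g H) (hrs : ∀ u v, s (e u) (e v) ↔ r u v) :
    IsSLOStarOrdering H (e v₀) s := by
  obtain ⟨⟨hr, hdist, hchild, hbdry⟩, hdeg⟩ := h
  have hs : IsStrictTotalOrder W s :=
    RelEmbedding.isStrictTotalOrder (s := r)
      ⟨e.symm.toEquiv.toEmbedding, fun {x y} => by
        change r (e.symm x) (e.symm y) ↔ s x y
        rw [← hrs, e.apply_symm_apply, e.apply_symm_apply]⟩
  refine ⟨⟨hs, e.surjective.forall₂.mpr ?_, ?_, e.surjective.forall₂.mpr ?_⟩,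
    e.surjective.forall₂.mpr ?_⟩
  · simpa only [hrs, dist_eq_of_iso] using hdist
  · simpa only [e.surjective.forall, hrs, isChild_iff_of_iso] using hchild
  · simpa only [hrs, isBoundary_iff_of_iso] using hbdry
  · simpa only [hrs, isInterior_iff_of_iso, e.degree_eq] using hdeg

lemma IsSLOStarTree.of_iso (hG : IsSLOStarTree G) (e : G ≃g H) : IsSLOStarTree H := by
  obtain ⟨hT, v₀, r, hr⟩ := hG
  exact ⟨hT.of_iso e, e v₀, fun x y => r (e.symm x) (e.symm y),
    hr.of_iso e fun _ _ => by simp only [e.symm_apply_apply]⟩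

end Iso

/-! ### Level sets in the case of equality -/

section Level

variable {n x y j v : ℕ} {F : ℕ → ℝ}

/-- `b` is the end of a level set of the antitone function `F` on `{0, …, n - 1}`. -/
structure IsLevelEnd (n : ℕ) (F : ℕ → ℝ) (b : ℕ) : Prop where
  pos : 0 < b
  le : b ≤ n
  lt_pred : b < n → F b < F (b - 1)

/-- The interval `[x, y)` is a level set of the antitone function `F` on `{0, …, n - 1}`. -/
structure IsLevel (n : ℕ) (F : ℕ → ℝ) (x y : ℕ) : Prop where
  lt : x < y
  eq_pred : F x = F (y - 1)
  left : 0 < x → IsLevelEnd n F x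
  right : IsLevelEnd n F y

lemma exists_isLevel (hF : Antitone F) (hv : v < n) :
    ∃ x y, IsLevel n F x y ∧ x ≤ v ∧ v < y := by
  have hex : ∃ x, F x = F v := ⟨v, rfl⟩
  have hey : ∃ y, v < y ∧ (y = n ∨ F y < F v) := ⟨n, hv, Or.inl rfl⟩
  obtain ⟨hvy, hy⟩ := Nat.find_spec hey
  have hyn : Nat.find hey ≤ n := Nat.find_min' hey ⟨hv, Or.inl rfl⟩
  have hxv : Nat.find hex ≤ v := Nat.find_min' hex rfl
  have hpred : F (Nat.find hey - 1) = F v := by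
    rcases Nat.lt_or_ge v (Nat.find hey - 1) with h | h
    · have hmin := Nat.find_min hey (m := Nat.find hey - 1) (by omega)
      push Not at hmin
      exact (hF h.le).antisymm (hmin h).2
    · rw [show Nat.find hey - 1 = v by omega]
  refine ⟨Nat.find hex, Nat.find hey, ⟨by omega, (Nat.find_spec hex).trans hpred.symm,
    fun h0 => ⟨h0, by omega, fun _ => ?_⟩, ⟨by omega, hyn, fun hn => ?_⟩⟩, hxv, hvy⟩
  · rw [Nat.find_spec hex]
    exact (hF (by omega)).lt_of_ne' (Nat.find_min hex (by omega))
  · rw [hpred]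
    exact hy.resolve_left hn.ne

namespace IsLevel

lemma eq (h : IsLevel n F x y) (hF : Antitone F) (hxv : x ≤ v) (hvy : v < y) : F v = F x :=
  (hF hxv).antisymm (h.eq_pred.trans_le (hF (by omega)))

lemma lt_of_le_apply (h : IsLevel n F x y) (hF : Antitone F) (hj : j < n) (hle : F x ≤ F j) :
    j < y := by
  by_contra hyj
  have := h.right.lt_pred (by omega)
  have := hF (not_lt.mp hyj)
  have := h.eq_pred
  linarith

end IsLevel

end Level

namespace IsAntitoneEigenfunction

variable {n k d x y b : ℕ} {F : ℕ → ℝ} {μ : ℝ}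

lemma lt_of_pos (hF : IsAntitoneEigenfunction n k d μ F) {i : ℕ} (hi : 0 < F i) : i < k := by
  by_contra hik
  exact hi.ne' (hF.eq_zero i (not_lt.mp hik))

lemma le_of_isLevel (hF : IsAntitoneEigenfunction n k d μ F) (h : IsLevel n F x y) (hx : x < k) :
    y ≤ k := by
  have := h.right.pos
  have := hF.lt_of_pos (h.eq_pred ▸ hF.pos x hx)
  omega

lemma apply_firstChild_eq (h : Admissible n k d) (hF : IsAntitoneEigenfunction n k d μ F)
    (hxy : IsLevel n F x y) (hlt : x + 1 < y) (hyk : y ≤ k) :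
    F (firstChild d x) = F (firstChild d y - 1) := by
  have hn := h.add_two_le
  have := (hF.degree_eq_and_eq_of_eq h (a := ⟨x, by omega⟩) (b := ⟨y - 1, by omega⟩)
    (Fin.mk_lt_mk.mpr (by omega)) (by simp only; omega) hxy.eq_pred).2
  rwa [Nat.sub_add_cancel (by omega)] at this

lemma childBound_eq_firstChild (h : Admissible n k d) (hF : IsAntitoneEigenfunction n k d μ F)
    (hxy : IsLevel n F x y) (hlt : x + 1 < y) (hyk : y ≤ k) :
    childBound n (optParent k d) y = firstChild d y := by
  rcases Nat.lt_or_eq_of_le hyk with hyk | rfl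
  · exact h.childBound_eq_firstChild (by omega) hyk
  have hn := h.add_two_le
  have hs := isSpiral_optTree n y d
  have hdeg := (hF.degree_eq_and_eq_of_eq h (a := ⟨x, by omega⟩) (b := ⟨y - 1, by omega⟩)
    (Fin.mk_lt_mk.mpr (by omega)) (by simp only; omega) hxy.eq_pred).1
  rw [hs.degree_eq, if_neg (by simp only; omega)] at hdeg
  simp only [Nat.sub_add_cancel (show 1 ≤ y by omega)] at hdeg
  rw [h.childBound_eq_firstChild (a := y - 1) (by omega) (by omega)] at hdeg
  have hsucc := firstChild_succ d (y - 1)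
  rw [Nat.sub_add_cancel (by omega)] at hsucc
  have := hs.lt_childBound_self (a := y) (by omega)
  have := h.two_le
  omega

/-- Otherwise the first vertex of the level set would have a child in the level set, and the tie
would push the level set beyond its end. -/
lemma le_firstChild_of_isLevel (h : Admissible n k d) (hF : IsAntitoneEigenfunction n k d μ F)
    (hxy : IsLevel n F x y) (hyk : y ≤ k) : y ≤ firstChild d x := by
  by_contra! hlt
  have hx := add_two_le_firstChild h.two_le x
  have hy := add_two_le_firstChild h.two_le y
  have htie := hF.apply_firstChild_eq h hxy (by omega) hyk
  rw [hxy.eq hF.antitone (by omega) hlt] at htie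
  have := hxy.lt_of_le_apply hF.antitone (by have := h.firstChild_le hyk; omega) htie.le
  omega

lemma le_childBound_of_isLevel (h : Admissible n k d) (hF : IsAntitoneEigenfunction n k d μ F)
    (hxy : IsLevel n F x y) (hx : 0 < x) : y ≤ childBound n (optParent k d) x := by
  rcases Nat.lt_or_ge x k with hxk | hxk
  · rw [h.childBound_eq_firstChild hx hxk]
    exact hF.le_firstChild_of_isLevel h hxy (hF.le_of_isLevel hxy hxk)
  · rw [h.childBound_eq_of_le hxk]
    exact hxy.right.le

end IsAntitoneEigenfunction

section Extremal

variable {n k d a b x y : ℕ} {F : ℕ → ℝ} {μ : ℝ} {H : SimpleGraph (Fin n)}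

/-- A tree `H` whose quadratic form agrees with that of the extremal tree at an eigenfunction of
the extremal tree. -/
structure IsExtremal (k d : ℕ) (μ : ℝ) (F : ℕ → ℝ) (H : SimpleGraph (Fin n)) : Prop where
  admissible : Admissible n k d
  eigenfunction : IsAntitoneEigenfunction n k d μ F
  sortedTree : SortedTree k d H
  quadForm_eq : quadForm (optTree n k d) (fun i => F i) = quadForm H (fun i => F i)

namespace IsExtremal

lemma isAcyclic (h : IsExtremal k d μ F H) : H.IsAcyclic := h.sortedTree.isTree.isAcyclic

lemma cut_eq (h : IsExtremal k d μ F H) (ha : IsLevelEnd n F a) (hb : IsLevelEnd n F b)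
    (hab : a ≤ b) : cut H a b = childBound n (optParent k d) a - b := by
  rw [← (isSpiral_optTree n k d).cut_eq ha.pos hab]
  rcases hb.le.lt_or_eq with hbn | rfl
  · have hFa := ha.lt_pred (hab.trans_lt hbn)
    have hFb := hb.lt_pred hbn
    obtain ⟨a, rfl⟩ := Nat.exists_eq_add_of_le' ha.pos
    obtain ⟨b, rfl⟩ := Nat.exists_eq_add_of_le' hb.pos
    exact ((isSpiral_optTree n k d).cut_eq_of_quadForm_eq h.isAcyclic
      (fun _ => h.sortedTree.degreeSum_optTree_le h.admissible) h.eigenfunction.antitone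
      h.quadForm_eq (by omega) (by omega) hFa hFb).symm
  · rw [cut_self_right, cut_self_right]

lemma degreeSum_add_two (h : IsExtremal k d μ F H) (ha : IsLevelEnd n F a) :
    degreeSum H a + 2 = childBound n (optParent k d) a + a := by
  have hs := isSpiral_optTree n k d
  rcases ha.le.lt_or_eq with han | rfl
  · rw [hs.degreeSum_eq_of_cut_eq h.isAcyclic ha.pos han
      (h.sortedTree.degreeSum_optTree_le h.admissible han.le), hs.degreeSum_add_two ha.pos han.le]
    rw [h.cut_eq ha ha le_rfl, hs.cut_eq ha.pos le_rfl]
  · have hn := h.admissible.add_two_le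
    rw [h.admissible.childBound_eq_of_le (by omega),
      h.sortedTree.degreeSum_add_two (by omega) le_rfl]

/-- The sharp case of `degreeSum_add_two_le`. -/
lemma degreeSum_add_two_eq_cut_add (h : IsExtremal k d μ F H) (ha : IsLevelEnd n F a)
    (hb : IsLevelEnd n F b) (hab : a ≤ b) (hle : b ≤ childBound n (optParent k d) a) :
    degreeSum H a + 2 = cut H a b + (a + b) := by
  rw [h.degreeSum_add_two ha, h.cut_eq ha hb hab]
  omega

lemma not_adj (h : IsExtremal k d μ F H) (ha : IsLevelEnd n F a) (hb : IsLevelEnd n F b)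
    (hle : b ≤ childBound n (optParent k d) a) {i j : Fin n} (hi : a ≤ i.val) (hib : i.val < b)
    (hj : a ≤ j.val) (hjb : j.val < b) : ¬H.Adj i j :=
  not_adj_of_degreeSum_add_two_eq h.isAcyclic ha.pos hb.le
    (h.degreeSum_add_two_eq_cut_add ha hb (hi.trans_lt hib).le hle) hi hib hj hjb

lemma lt_of_adj (h : IsExtremal k d μ F H) (ha : IsLevelEnd n F a) (hb : IsLevelEnd n F b)
    (hab : a ≤ b) (hle : childBound n (optParent k d) a ≤ b) {i j : Fin n} (hij : H.Adj i j)
    (hi : i.val < a) : j.val < b :=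
  lt_of_adj_of_cut_eq_zero (by rw [h.cut_eq ha hb hab, Nat.sub_eq_zero_of_le hle]) hij hi

lemma adj_zero_one (h : IsExtremal k d μ F H) (h2 : IsLevelEnd n F 2) {i j : Fin n}
    (hi : i.val = 0) (hj : j.val = 1) : H.Adj i j := by
  have hsum := card_interedges_add_cut H 2 2
  have hcut := h.cut_eq h2 h2 le_rfl
  have hdeg := h.degreeSum_add_two h2
  have hle := h.admissible.one_le
  have hn := h.admissible.add_two_le
  have hbound : 2 < childBound n (optParent k d) 2 :=
    (isSpiral_optTree n k d).lt_childBound_self (by omega)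
  obtain ⟨⟨u, v⟩, huv⟩ := card_pos.mp (show 0 < #(H.interedges (initSeg n 2) (initSeg n 2)) by
    omega)
  obtain ⟨hu, hv, huv⟩ := H.mk_mem_interedges_iff.mp huv
  rw [mem_initSeg] at hu hv
  have hne := Fin.val_ne_of_ne huv.ne
  rcases Nat.eq_zero_or_pos u.val with hu0 | hu0
  · rwa [Fin.ext (hi.trans hu0.symm), Fin.ext (show j.val = v.val by omega)]
  · rw [Fin.ext (show i.val = v.val by omega), Fin.ext (show j.val = u.val by omega)]
    exact huv.symm

lemma existsUnique_adj_lt (h : IsExtremal k d μ F H) {v : Fin n} (hv : 0 < v.val) :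
    ∃! i, i < v ∧ H.Adj i v := by
  obtain ⟨x, y, hxy, hxv, hvy⟩ := exists_isLevel h.eigenfunction.antitone v.isLt
  rcases Nat.eq_zero_or_pos x with rfl | hx
  · have hy := h.eigenfunction.le_firstChild_of_isLevel h.admissible hxy
      (h.eigenfunction.le_of_isLevel hxy h.admissible.one_le)
    rw [firstChild, zero_mul] at hy
    obtain rfl : y = 2 := by omega
    refine ⟨⟨0, by omega⟩, ⟨Fin.lt_def.mpr hv, h.adj_zero_one hxy.right rfl (by omega)⟩, ?_⟩
    rintro j ⟨hj, -⟩
    exact Fin.ext (by simp only; omega)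
  · have hle := h.eigenfunction.le_childBound_of_isLevel h.admissible hxy hx
    obtain ⟨i, ⟨hix, hvi⟩, huniq⟩ := existsUnique_adj_of_degreeSum_add_two_eq h.isAcyclic hx
      hxy.right.le (h.degreeSum_add_two_eq_cut_add (hxy.left hx) hxy.right hxy.lt.le hle) hxv hvy
    refine ⟨i, ⟨Fin.lt_def.mpr (by omega), hvi.symm⟩, fun j hj => huniq j ⟨?_, hj.2.symm⟩⟩
    by_contra hjx
    exact h.not_adj (hxy.left hx) hxy.right hle (by omega) (by have := hj.1; omega) hxv hvy hj.2

lemma apply_eq_of_crossing_of_apply_lt (h : IsExtremal k d μ F H) {p p' j j' : Fin n}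
    (hpj : p < j) (hjj' : j < j') (hadj : H.Adj p j) (hadj' : H.Adj p' j') (hlt : F p < F p') :
    F j = F j' := by
  by_contra hne
  have hF := h.eigenfunction.antitone
  obtain ⟨w, x, hwx, hwp', hp'x⟩ := exists_isLevel hF p'.isLt
  obtain ⟨u, z, huz, huj, hjz⟩ := exists_isLevel hF j.isLt
  have hp'p : p' < p := by
    by_contra hpp'
    exact hlt.not_ge (hF (not_lt.mp hpp'))
  have hxp : x ≤ p := by
    by_contra hpx
    exact hlt.ne ((hwx.eq hF (by omega) (by omega)).trans (hwx.eq hF hwp' hp'x).symm)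
  have hzj' : z ≤ j' := by
    by_contra hj'z
    exact hne ((huz.eq hF huj hjz).trans (huz.eq hF (by omega) (by omega)).symm)
  rcases Nat.le_total (childBound n (optParent k d) x) z with hle | hle
  · have := h.lt_of_adj hwx.right huz.right (by omega) hle hadj' hp'x
    omega
  · exact h.not_adj hwx.right huz.right hle hxp (by omega) (by omega) hjz hadj

/-- The children of the level set of `p` and `p'` form a single level set. -/
lemma apply_eq_of_crossing_of_apply_eq (h : IsExtremal k d μ F H) {p p' j j' : Fin n}
    (hp'p : p' < p) (hpj : p < j) (hjj' : j < j') (hadj : H.Adj p j) (hadj' : H.Adj p' j')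
    (heq : F p = F p') : F j = F j' := by
  have hF := h.eigenfunction.antitone
  have hd := h.admissible.two_le
  obtain ⟨x, y, hxy, hxp', hp'y⟩ := exists_isLevel hF p'.isLt
  rcases Nat.lt_or_ge x k with hxk | hkx
  swap
  · rw [h.eigenfunction.eq_zero j (by omega), h.eigenfunction.eq_zero j' (by omega)]
  have hyk := h.eigenfunction.le_of_isLevel hxy hxk
  have hpy := hxy.lt_of_le_apply hF p.isLt (heq.trans (hxy.eq hF hxp' hp'y)).ge
  have htie := h.eigenfunction.apply_firstChild_eq h.admissible hxy (by omega) hyk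
  have hbound := h.eigenfunction.childBound_eq_firstChild h.admissible hxy (by omega) hyk
  have hyn := h.admissible.firstChild_le hyk
  have hyc := add_two_le_firstChild hd y
  have hxc := firstChild_mono d (show x + 1 ≤ y by omega)
  rw [firstChild_succ] at hxc
  obtain ⟨z, w, hzw, hzx, hxw⟩ := exists_isLevel hF (show firstChild d x < n by omega)
  have hyw := hzw.lt_of_le_apply hF (show firstChild d y - 1 < n by omega)
    ((hzw.eq hF hzx hxw).symm.trans htie).le
  have hj'w := h.lt_of_adj hxy.right hzw.right (by omega) (by omega) hadj' hp'y
  have hzj : z ≤ j := by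
    rcases Nat.eq_zero_or_pos x with rfl | hx
    · rw [firstChild, zero_mul] at hzx
      omega
    · by_contra hjz
      refine h.not_adj (hxy.left hx) (hzw.left (by omega)) ?_ (by omega) (by omega) (by omega)
        (by omega) hadj
      rwa [h.admissible.childBound_eq_firstChild hx hxk]
  rw [hzw.eq hF hzj (by omega), hzw.eq hF (by omega) hj'w]

lemma apply_eq_of_crossing (h : IsExtremal k d μ F H) {p p' j j' : Fin n} (hp'p : p' < p)
    (hpj : p < j) (hjj' : j < j') (hadj : H.Adj p j) (hadj' : H.Adj p' j') : F j = F j' := by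
  rcases (h.eigenfunction.antitone hp'p.le : F p ≤ F p').lt_or_eq with hlt | heq
  · exact h.apply_eq_of_crossing_of_apply_lt hpj hjj' hadj hadj' hlt
  · exact h.apply_eq_of_crossing_of_apply_eq hp'p hpj hjj' hadj hadj' heq

lemma degree_eq_of_isLevelEnd (h : IsExtremal k d μ F H) (ha : IsLevelEnd n F a) (hak : a ≤ k)
    (hbound : childBound n (optParent k d) a = firstChild d a) {i : Fin n} (hi : i.val < a) :
    H.degree i = d := by
  have hdeg := h.degreeSum_add_two ha
  rw [hbound, ← mul_add_two_eq_firstChild_add h.admissible.two_le, Nat.add_right_cancel_iff,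
    ← card_initSeg ha.le, ← smul_eq_mul, ← sum_const, card_initSeg ha.le] at hdeg
  refine ((sum_eq_sum_iff_of_le fun j hj => ?_).mp hdeg.symm i (mem_initSeg.mpr hi)).symm
  exact h.sortedTree.le_degree j ((mem_initSeg.mp hj).trans_le hak)

lemma degree_eq (h : IsExtremal k d μ F H) {i : Fin n} (hi : i.val + 1 < k) : H.degree i = d := by
  have hF := h.eigenfunction.antitone
  have hn := h.admissible.add_two_le
  obtain ⟨x, y, hxy, hxk, hky⟩ := exists_isLevel hF (show k - 1 < n by omega)
  have hyk := h.eigenfunction.le_of_isLevel hxy (by omega)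
  obtain rfl : y = k := by omega
  rcases Nat.lt_or_ge (x + 1) y with hxy' | hxy'
  · exact h.degree_eq_of_isLevelEnd hxy.right le_rfl
      (h.eigenfunction.childBound_eq_firstChild h.admissible hxy hxy' le_rfl) (by omega)
  · exact h.degree_eq_of_isLevelEnd (hxy.left (by omega)) (by omega)
      (h.admissible.childBound_eq_firstChild (by omega) (by omega)) (by omega)

end IsExtremal

end Extremal

/-! ### Exchanging vertices with equal values -/

section Exchange

variable {n k d : ℕ} {F : ℕ → ℝ} {μ : ℝ} {H : SimpleGraph (Fin n)}

/-- The sequence of the parents of the vertices `0, …, n - 1` of a tree in which every vertex but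
the first has exactly one smaller neighbour. The entry of a vertex without smaller neighbours is
`0`. -/
def parentSeq (H : SimpleGraph (Fin n)) : Lex (Fin n → ℕ) :=
  toLex fun i => sInf (Fin.val '' {p | p < i ∧ H.Adj p i})

lemma parentSeq_comap_swap_lt {p p' j j' : Fin n} (hp'j : p' < j) (hpj : p < j) (hjj' : j < j')
    (hadj : H.Adj p j) (hadj' : H.Adj p' j') (hlt : ∀ q < j, H.Adj q j → p' < q) :
    parentSeq (H.comap (Equiv.swap j j')) < parentSeq H := by
  have hfix : ∀ q < j, Equiv.swap j j' q = q := fun q hq =>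
    Equiv.swap_apply_of_ne_of_ne hq.ne (hq.trans hjj').ne
  refine ⟨j, fun i hij => congrArg (fun s => sInf (Fin.val '' s)) (Set.ext fun q => ?_), ?_⟩
  · refine and_congr_right fun hqi => ?_
    rw [SimpleGraph.comap_adj, hfix q (hqi.trans hij), hfix i hij]
  · obtain ⟨q, ⟨hqj, hq⟩, hqmin⟩ :=
      Nat.sInf_mem (s := Fin.val '' {q | q < j ∧ H.Adj q j}) ⟨p, p, ⟨hpj, hadj⟩, rfl⟩
    calc sInf (Fin.val '' {q | q < j ∧ (H.comap (Equiv.swap j j')).Adj q j})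
        ≤ p' := Nat.sInf_le ⟨p', ⟨hp'j, by
          rwa [SimpleGraph.comap_adj, hfix p' hp'j, Equiv.swap_apply_left]⟩, rfl⟩
      _ < q := hlt q hqj hq
      _ = _ := hqmin

lemma SortedTree.comap (hH : SortedTree k d H) (σ : Equiv.Perm (Fin n))
    (hσ : ∀ i, (σ i).val < k ↔ i.val < k) : SortedTree k d (H.comap σ) := by
  have hdeg : ∀ i, (H.comap σ).degree i = H.degree (σ i) := fun i =>
    ((SimpleGraph.Iso.comap σ H).degree_eq i).symm
  refine ⟨(SimpleGraph.Iso.comap σ H).isTree_iff.mpr hH.isTree, fun i hi => ?_, fun i hi => ?_⟩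
  · exact (hH.le_degree _ ((hσ i).mpr hi)).trans_eq (hdeg i).symm
  · exact (hdeg i).trans (hH.degree_eq_one _ (by rwa [← not_lt, hσ, not_lt]))

namespace IsExtremal

lemma comap_swap (h : IsExtremal k d μ F H) {j j' : Fin n} (heq : F j = F j') :
    IsExtremal k d μ F (H.comap (Equiv.swap j j')) := by
  have hF : ∀ i, F (Equiv.swap j j' i) = F i := fun i => by
    rw [Equiv.swap_apply_def]
    split_ifs with h₁ h₂
    · rw [h₁, heq]
    · rw [h₂, heq]
    · rfl
  have hlt : ∀ i : Fin n, i.val < k ↔ 0 < F i := fun i =>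
    ⟨h.eigenfunction.pos i, h.eigenfunction.lt_of_pos⟩
  refine ⟨h.admissible, h.eigenfunction, h.sortedTree.comap _ fun i => by rw [hlt, hlt, hF], ?_⟩
  rw [h.quadForm_eq, quadForm_of_iso (SimpleGraph.Iso.comap (Equiv.swap j j') H)]
  exact congrArg _ (funext hF)

lemma nonempty_iso_optTree (h : IsExtremal k d μ F H) : Nonempty (H ≃g optTree n k d) := by
  obtain ⟨K, hKmem, hmin⟩ := exists_min_image {K | IsExtremal k d μ F K ∧ Nonempty (H ≃g K)}
    parentSeq ⟨H, mem_filter.mpr ⟨mem_univ _, h, ⟨SimpleGraph.Iso.refl⟩⟩⟩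
  obtain ⟨hK, ⟨e⟩⟩ := (mem_filter.mp hKmem).2
  have hmono : ∀ i j i' j', i < j → K.Adj i j → i' < j' → K.Adj i' j' → j ≤ j' → i ≤ i' := by
    intro i j i' j' hij hadj hij' hadj' hjj'
    have huniq : ∀ q < j, K.Adj q j → q = i := fun q hqj hq =>
      (hK.existsUnique_adj_lt ((Nat.zero_le _).trans_lt hij)).unique ⟨hqj, hq⟩ ⟨hij, hadj⟩
    rcases hjj'.eq_or_lt with rfl | hjj'
    · exact (huniq i' hij' hadj').ge
    by_contra! hi'i
    have heq := hK.apply_eq_of_crossing hi'i hij hjj' hadj hadj'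
    refine (parentSeq_comap_swap_lt (hi'i.trans hij) hij hjj' hadj hadj' fun q hqj hq => ?_).not_ge
      (hmin _ (mem_filter.mpr ⟨mem_univ _, hK.comap_swap heq,
        ⟨e.trans (SimpleGraph.Iso.comap (Equiv.swap j j') K).symm⟩⟩))
    rwa [huniq q hqj hq]
  obtain ⟨p, hp⟩ := exists_isSpiral (fun j hj => (hK.existsUnique_adj_lt hj).exists) hmono
  exact ⟨hK.sortedTree.eq_optTree_of_isSpiral hK.admissible (fun _ => hK.degree_eq) hp ▸ e⟩

end IsExtremal

end Exchange

/-! ### Numbering the vertices -/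

section Numbering

variable {n k d : ℕ}

lemma mem_iff_lt_card_of_isLowerSet {s : Finset (Fin n)} (hs : IsLowerSet (s : Set (Fin n)))
    {i : Fin n} : i ∈ s ↔ i.val < #s := by
  constructor
  · intro hi
    rw [← Nat.succ_le_iff, Nat.succ_eq_add_one, ← Fin.card_Iic]
    exact card_le_card fun j hj => hs (mem_Iic.mp hj) hi
  · intro hlt
    by_contra hi
    refine hlt.not_ge ?_
    rw [← Fin.card_Iio]
    exact card_le_card fun j hj => mem_Iio.mpr (not_le.mp fun hij => hi (hs hij hj))

lemma exists_antitone_extend {g : Fin n → ℝ} (hg : Antitone g) (hg0 : ∀ i, 0 ≤ g i) :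
    ∃ F : ℕ → ℝ, Antitone F ∧ (∀ i : Fin n, F i = g i) ∧ ∀ i, n ≤ i → F i = 0 := by
  refine ⟨fun i => if h : i < n then g ⟨i, h⟩ else 0, fun i j hij => ?_,
    fun i => dif_pos i.isLt, fun i hi => dif_neg hi.not_gt⟩
  dsimp only
  split_ifs with hj hi hi
  · exact hg hij
  · omega
  · exact hg0 _
  · rfl

variable {G H : SimpleGraph (Fin n)}

lemma inClassTd.one_le (hG : inClassTd k d G) : 1 ≤ k := by
  obtain ⟨⟨-, ⟨v, hv⟩, -⟩, hcard, -⟩ := hG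
  rw [← hcard, Nat.one_le_iff_ne_zero, ← Nat.pos_iff_ne_zero, card_pos]
  exact ⟨v, mem_filter.mpr ⟨mem_univ v, hv⟩⟩

lemma inClassTd.le (hG : inClassTd k d G) : k ≤ n :=
  hG.2.1 ▸ (card_le_univ (interiorFinset G)).trans_eq (Fintype.card_fin n)

lemma inClassTd.sortedTree (hG : inClassTd k d G) (hlow : IsLowerSet {i | IsInterior G i}) :
    SortedTree k d G := by
  obtain ⟨⟨hT, hI, -⟩, hcard, hdeg⟩ := hG
  have hlow' : IsLowerSet (interiorFinset G : Set (Fin n)) := by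
    simpa only [interiorFinset, coe_filter, mem_univ, true_and] using hlow
  have hinter : ∀ i : Fin n, IsInterior G i ↔ i.val < k := fun i => by
    rw [← hcard, ← mem_iff_lt_card_of_isLowerSet hlow', interiorFinset, mem_filter,
      and_iff_right (mem_univ i)]
  refine ⟨hT, fun i hi => hdeg i ((hinter i).mpr hi), fun i hi => ?_⟩
  refine (not_isInterior_iff_isBoundary hT.connected hI i).mp fun h => ?_
  exact hi.not_gt ((hinter i).mp h)

lemma IsGroundState.comp_iso {V W : Type*} [Fintype V] [Fintype W] {G : SimpleGraph V}
    {H : SimpleGraph W} {f : W → ℝ} (hf : IsGroundState H f) (e : G ≃g H) :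
    IsGroundState G (f ∘ e) where
  eq_zero v hv := hf.eq_zero _ ((isInterior_iff_of_iso e).not.mpr hv)
  pos v hv := hf.pos _ ((isInterior_iff_of_iso e).mpr hv)
  quadForm_eq := by
    rw [← quadForm_of_iso, dirichletLambda_eq_of_iso e, hf.quadForm_eq]
    exact congrArg _ (Equiv.sum_comp e.toEquiv fun w => f w ^ 2).symm

lemma IsGroundState.pos_iff {f : Fin n → ℝ} (hf : IsGroundState G f) {v : Fin n} :
    0 < f v ↔ IsInterior G v :=
  ⟨fun h => by_contra fun hv => h.ne' (hf.eq_zero v hv), hf.pos v⟩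

lemma exists_iso_antitone_isGroundState (hG : G.Connected) (hI : ∃ v, IsInterior G v) :
    ∃ (H : SimpleGraph (Fin n)) (g : Fin n → ℝ),
      Nonempty (G ≃g H) ∧ Antitone g ∧ IsGroundState H g := by
  obtain ⟨f, hf⟩ := exists_isGroundState hG hI
  let σ := Tuple.sort fun i => -f i
  exact ⟨G.comap σ, f ∘ σ, ⟨(SimpleGraph.Iso.comap σ G).symm⟩,
    fun i j hij => neg_le_neg_iff.mp (Tuple.monotone_sort (fun i => -f i) hij),
    hf.comp_iso (SimpleGraph.Iso.comap σ G)⟩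

/-- Numbering the vertices by decreasing values of a ground state puts the interior vertices
first. -/
lemma inClassTd.exists_iso_sortedTree (hG : inClassTd k d G) :
    ∃ (H : SimpleGraph (Fin n)) (F : ℕ → ℝ), Nonempty (G ≃g H) ∧ SortedTree k d H ∧
      Antitone F ∧ (∀ i, n ≤ i → F i = 0) ∧ IsGroundState H fun i => F i := by
  obtain ⟨H, g, ⟨e⟩, hanti, hg⟩ := exists_iso_antitone_isGroundState hG.1.1.connected hG.1.2.1
  have hg0 : ∀ i, 0 ≤ g i := fun i => by
    by_cases hi : IsInterior H i
    · exact (hg.pos i hi).le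
    · exact (hg.eq_zero i hi).ge
  obtain ⟨F, hF, hFg, hF0⟩ := exists_antitone_extend hanti hg0
  refine ⟨H, F, ⟨e⟩, (hG.of_iso e).sortedTree fun i j hji hi => ?_, hF, hF0, ?_⟩
  · exact hg.pos_iff.mp ((hg.pos i hi).trans_le (hanti hji))
  · simpa only [hFg] using hg

lemma inClassTd.admissible (hG : inClassTd k d G) (hd : 2 ≤ d) : Admissible n k d := by
  obtain ⟨H, -, -, hH, -⟩ := hG.exists_iso_sortedTree
  exact hH.admissible hG.one_le hG.le hd

end Numbering

/-! ### Spiral-like orderings -/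

section SpiralLike

variable {n k d : ℕ} {G : SimpleGraph (Fin n)} {u₀ : Fin n}

lemma exists_equiv_of_isStrictTotalOrder {V : Type*} [Fintype V] (hn : Fintype.card V = n)
    (r : V → V → Prop) [IsStrictTotalOrder V r] :
    ∃ σ : Fin n ≃ V, ∀ i j, r (σ i) (σ j) ↔ i < j := by
  let := linearOrderOfSTO r
  let σ := Fintype.orderIsoFinOfCardEq V hn
  exact ⟨σ.toEquiv, fun i j => σ.lt_iff_lt⟩

lemma IsSLOStarOrdering.exists_iso {r : Fin n → Fin n → Prop} {v₀ : Fin n}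
    (h : IsSLOStarOrdering G v₀ r) :
    ∃ (H : SimpleGraph (Fin n)) (u₀ : Fin n),
      Nonempty (G ≃g H) ∧ IsSLOStarOrdering H u₀ (· < ·) := by
  have : IsStrictTotalOrder (Fin n) r := h.1.1
  obtain ⟨σ, hσ⟩ := exists_equiv_of_isStrictTotalOrder (Fintype.card_fin n) r
  let e := (SimpleGraph.Iso.comap σ G).symm
  refine ⟨G.comap σ, e v₀, ⟨e⟩, h.of_iso e fun u v => ?_⟩
  rw [← hσ]
  simp [e]

lemma IsSLOOrdering.exists_lt_adj (h : IsSLOOrdering G u₀ (· < ·)) (hG : G.IsTree) {j : Fin n}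
    (hj : 0 < j.val) : ∃ i, i < j ∧ G.Adj i j := by
  have hj₀ : j ≠ u₀ := by
    rintro rfl
    have hdist := h.2.1 ⟨0, by omega⟩ j hj
    rw [SimpleGraph.dist_self, Nat.le_zero, hG.connected.dist_eq_zero_iff] at hdist
    exact hj.ne' (congrArg Fin.val hdist)
  obtain ⟨w, hw⟩ := hG.connected.exists_walk_length_eq_dist j u₀
  cases w with
  | nil => exact absurd rfl hj₀
  | @cons _ i _ hadj w =>
    have hle := SimpleGraph.dist_le w
    rw [SimpleGraph.Walk.length_cons] at hw
    rw [SimpleGraph.dist_comm] at hle hw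
    refine ⟨i, hadj.ne'.lt_of_le (not_lt.mp fun hji => ?_), hadj.symm⟩
    have := h.2.1 j i hji
    omega

lemma IsSLOOrdering.isChild_of_adj (h : IsSLOOrdering G u₀ (· < ·)) (hG : G.IsTree) {i j : Fin n}
    (hij : i < j) (hadj : G.Adj i j) : IsChild G u₀ i j := by
  refine ⟨hadj, (hG.dist_eq_dist_add_one_of_adj u₀ hadj).resolve_left fun hdist => ?_⟩
  have := h.2.1 i j hij
  omega

lemma IsSLOOrdering.exists_isSpiral (h : IsSLOOrdering G u₀ (· < ·)) (hG : G.IsTree) :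
    ∃ p, IsSpiral G p := by
  refine FK.exists_isSpiral (fun j hj => h.exists_lt_adj hG hj) ?_
  intro i j i' j' hij hadj hij' hadj' hjj'
  by_contra! hi'i
  exact hjj'.not_gt
    (h.2.2.1 i' i j' j hi'i (h.isChild_of_adj hG hij' hadj') (h.isChild_of_adj hG hij hadj))

lemma IsSLOOrdering.isLowerSet_isInterior (h : IsSLOOrdering G u₀ (· < ·))
    (hG : IsTreeWithBoundary G) : IsLowerSet {i | IsInterior G i} := by
  intro i j hji hi
  rcases hji.eq_or_lt with rfl | hji
  · exact hi
  have hbd := not_isInterior_iff_isBoundary hG.1.connected hG.2.1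
  by_contra hj
  exact (hbd i).mpr (h.2.2.2 j i hji ((hbd j).mp hj)) hi

/-- By monotonicity of the degrees, the exceptional vertex may be taken to be the last interior
one. -/
lemma SortedTree.degree_eq_of_isSLOStarOrdering (hG : SortedTree k d G) (hkn : k ≤ n) (hd : 2 ≤ d)
    (h : IsSLOStarOrdering G u₀ (· < ·)) {v : Fin n}
    (hv : ∀ w, IsInterior G w → w ≠ v → G.degree w = d) {i : Fin n} (hi : i.val + 1 < k) :
    G.degree i = d := by
  have hin : i.val + 1 < n := hi.trans_le hkn
  have hI := (hG.isInterior_iff hd (i := i)).mpr (by omega)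
  have hI' := (hG.isInterior_iff hd (i := ⟨i + 1, hin⟩)).mpr hi
  have hlt : i < ⟨i + 1, hin⟩ := Nat.lt_succ_self i
  by_cases hiv : i = v
  · refine (hG.le_degree i (by omega)).antisymm' ?_
    exact (h.2 _ _ hlt hI hI').trans_eq (hv _ hI' (hiv ▸ hlt.ne'))
  · exact hv i hI hiv

lemma IsSLOStarTree.nonempty_iso_optTree (hS : IsSLOStarTree G) (hG : inClassTd k d G)
    (hd : 2 ≤ d) {v : Fin n} (hv : ∀ w, IsInterior G w → w ≠ v → G.degree w = d) :
    Nonempty (G ≃g optTree n k d) := by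
  obtain ⟨-, v₀, r, hr⟩ := hS
  obtain ⟨H, u₀, ⟨e⟩, hH⟩ := hr.exists_iso
  have hclass := hG.of_iso e
  have hsorted := hclass.sortedTree (hH.1.isLowerSet_isInterior hclass.1)
  obtain ⟨p, hp⟩ := hH.1.exists_isSpiral hclass.1.1
  have hv' : ∀ w, IsInterior H w → w ≠ e v → H.degree w = d := e.surjective.forall.mpr
    fun w hw hne =>
      (e.degree_eq w).trans (hv w ((isInterior_iff_of_iso e).mp hw) (ne_of_apply_ne e hne))
  exact ⟨hsorted.eq_optTree_of_isSpiral (hG.admissible hd)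
    (fun _ => hsorted.degree_eq_of_isSLOStarOrdering hG.le hd hH hv') hp ▸ e⟩

end SpiralLike

/-! ### Minimality of the extremal tree -/

section FaberKrahn

variable {n k d : ℕ} {G H : SimpleGraph (Fin n)} {F : ℕ → ℝ}

namespace SortedTree

lemma quadForm_optTree_le (hH : SortedTree k d H) (h : Admissible n k d) (hF : Antitone F) :
    quadForm (optTree n k d) (fun i => F i) ≤ quadForm H (fun i => F i) :=
  (isSpiral_optTree n k d).quadForm_le hH.isTree.isAcyclic
    (fun _ ha => hH.degreeSum_optTree_le h ha) hF

lemma isInterior_optTree_iff (hH : SortedTree k d H) (h : Admissible n k d) {i : Fin n} :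
    IsInterior (optTree n k d) i ↔ IsInterior H i := by
  rw [h.sortedTree_optTree.isInterior_iff h.two_le, hH.isInterior_iff h.two_le]

lemma dirichletLambda_optTree_mul_le (hH : SortedTree k d H) (h : Admissible n k d)
    (hg : IsGroundState H fun i => F i) :
    dirichletLambda (optTree n k d) * ∑ i : Fin n, F i ^ 2 ≤
      quadForm (optTree n k d) fun i => F i := by
  obtain ⟨hT, hI, -⟩ := h.inClassTd_optTree.1
  exact dirichletLambda_mul_sum_sq_le hT.connected hI fun i hi =>
    hg.eq_zero i ((hH.isInterior_optTree_iff h).not.mp hi)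

lemma dirichletLambda_optTree_le (hH : SortedTree k d H) (h : Admissible n k d)
    (hF : Antitone F) (hg : IsGroundState H fun i => F i) :
    dirichletLambda (optTree n k d) ≤ dirichletLambda H := by
  obtain ⟨-, ⟨v, hv⟩, -⟩ := (hH.inClassTd h).1
  have hpos : 0 < ∑ i : Fin n, F i ^ 2 :=
    sum_sq_pos (f := fun i : Fin n => F i) (Function.ne_iff.mpr ⟨v, (hg.pos v hv).ne'⟩)
  refine le_of_mul_le_mul_right ?_ hpos
  calc dirichletLambda (optTree n k d) * ∑ i : Fin n, F i ^ 2
      ≤ quadForm (optTree n k d) (fun i => F i) := hH.dirichletLambda_optTree_mul_le h hg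
    _ ≤ quadForm H (fun i => F i) := hH.quadForm_optTree_le h hF
    _ = dirichletLambda H * ∑ i : Fin n, F i ^ 2 := hg.quadForm_eq

/-- Equality of the eigenvalues forces equality throughout the proof of
`dirichletLambda_optTree_le`. -/
lemma isExtremal (hH : SortedTree k d H) (h : Admissible n k d) (hF : Antitone F)
    (hF0 : ∀ i, n ≤ i → F i = 0) (hg : IsGroundState H fun i => F i)
    (heq : dirichletLambda H = dirichletLambda (optTree n k d)) :
    IsExtremal k d (dirichletLambda (optTree n k d)) F H := by
  have hle := hH.quadForm_optTree_le h hF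
  have hge := hH.dirichletLambda_optTree_mul_le h hg
  have hquad : quadForm H (fun i => F i) =
      dirichletLambda (optTree n k d) * ∑ i : Fin n, F i ^ 2 := heq ▸ hg.quadForm_eq
  have hkn : k ≤ n := by have := h.add_two_le; omega
  obtain ⟨hT, hI, -⟩ := h.inClassTd_optTree.1
  refine ⟨h, ⟨hF, fun i hi => ?_, fun i hi => ?_, fun i hi => ?_⟩, hH,
    hle.antisymm (hquad.trans_le hge)⟩
  · exact hg.pos ⟨i, hi.trans_le hkn⟩ ((hH.isInterior_iff h.two_le).mpr hi)
  · rcases Nat.lt_or_ge i n with hin | hin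
    · exact hg.eq_zero ⟨i, hin⟩ ((hH.isInterior_iff h.two_le).not.mpr hi.not_gt)
    · exact hF0 i hin
  · exact lapApply_eq_of_quadForm_eq hT.connected hI
      (fun i hi => hg.eq_zero i ((hH.isInterior_optTree_iff h).not.mp hi))
      ((hle.trans_eq hquad).antisymm hge)
      ((h.sortedTree_optTree.isInterior_iff h.two_le).mpr hi)

end SortedTree

lemma inClassTd.dirichletLambda_optTree_le (hG : inClassTd k d G) (hd : 2 ≤ d) :
    dirichletLambda (optTree n k d) ≤ dirichletLambda G := by
  obtain ⟨H, F, ⟨e⟩, hH, hF, -, hg⟩ := hG.exists_iso_sortedTree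
  rw [dirichletLambda_eq_of_iso e]
  exact hH.dirichletLambda_optTree_le (hG.admissible hd) hF hg

lemma inClassTd.nonempty_iso_optTree (hG : inClassTd k d G) (hd : 2 ≤ d)
    (heq : dirichletLambda G = dirichletLambda (optTree n k d)) :
    Nonempty (G ≃g optTree n k d) := by
  obtain ⟨H, F, ⟨e⟩, hH, hF, hF0, hg⟩ := hG.exists_iso_sortedTree
  have hext := hH.isExtremal (hG.admissible hd) hF hF0 hg (dirichletLambda_eq_of_iso e ▸ heq)
  exact hext.nonempty_iso_optTree.map e.trans

lemma inClassTd.hasFKTd_iff (hG : inClassTd k d G) (hd : 2 ≤ d) :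
    hasFKTd k d G ↔ Nonempty (G ≃g optTree n k d) := by
  constructor
  · rintro ⟨-, hmin⟩
    exact hG.nonempty_iso_optTree hd
      ((hmin _ (hG.admissible hd).inClassTd_optTree).antisymm (hG.dirichletLambda_optTree_le hd))
  · rintro ⟨e⟩
    refine ⟨hG, fun G' hG' => ?_⟩
    rw [dirichletLambda_eq_of_iso e]
    exact hG'.dirichletLambda_optTree_le hd

lemma Admissible.exists_degree_eq_of_iso (h : Admissible n k d) (e : G ≃g optTree n k d) :
    ∃ v, IsInterior G v ∧ G.degree v = d + ∑ w ∈ interiorFinset G, (G.degree w - d) ∧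
      ∀ w, IsInterior G w → w ≠ v → G.degree w = d := by
  have hk := h.one_le
  have hkn := h.add_two_le
  have hinter : ∀ w, IsInterior G w ↔ (e w).val < k := fun w => by
    rw [← isInterior_iff_of_iso e, h.sortedTree_optTree.isInterior_iff h.two_le]
  obtain ⟨v, hv⟩ := e.surjective ⟨k - 1, by omega⟩
  have hvk : (e v).val + 1 = k := by
    rw [hv]
    exact Nat.sub_add_cancel hk
  have hvI : IsInterior G v := (hinter v).mpr (by omega)
  have hother : ∀ w, IsInterior G w → w ≠ v → G.degree w = d := fun w hw hne => by
    have hval : (e w).val ≠ (e v).val := fun hval => hne (e.injective (Fin.ext hval))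
    have := (hinter w).mp hw
    rw [← e.degree_eq]
    exact h.degree_eq_of_lt (by omega)
  have hmem : ∀ w, w ∈ interiorFinset G ↔ IsInterior G w := fun w => by
    rw [interiorFinset, mem_filter, and_iff_right (mem_univ w)]
  have hdv : d ≤ G.degree v := e.degree_eq v ▸ h.le_degree_of_add_one_eq hvk
  refine ⟨v, hvI, ?_, hother⟩
  rw [sum_eq_single_of_mem v ((hmem v).mpr hvI) fun w hw hne => by
    rw [hother w ((hmem w).mp hw) hne, Nat.sub_self]]
  exact (Nat.add_sub_cancel' hdv).symm

lemma inClassTd.nonempty_iso_optTree_iff (hG : inClassTd k d G) (hd : 2 ≤ d) :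
    Nonempty (G ≃g optTree n k d) ↔ IsSLOStarTree G ∧
      ∃ v, IsInterior G v ∧ G.degree v = d + ∑ w ∈ interiorFinset G, (G.degree w - d) ∧
        ∀ w, IsInterior G w → w ≠ v → G.degree w = d := by
  have h := hG.admissible hd
  constructor
  · rintro ⟨e⟩
    exact ⟨h.isSLOStarTree_optTree.of_iso e.symm, h.exists_degree_eq_of_iso e⟩
  · rintro ⟨hS, v, -, -, hv⟩
    exact hS.nonempty_iso_optTree hG hd hv

end FaberKrahn

/-- **Theorem 2.** A tree `G` has the Faber-Krahn property in the class
`T_d^(n,k)` if and only if it is an SLO*-tree in which exactly one interior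
vertex has degree `d° = d + Σ_{v ∈ V₀} (d_v - d)` and all other interior
vertices have degree `d`; `G` is then uniquely determined up to isomorphism. -/
theorem faberKrahn_Td (n k d : ℕ) (hd : 2 ≤ d) (hk1 : 1 ≤ k) (hkn : k + 1 ≤ n)
    (G : SimpleGraph (Fin n)) (hG : inClassTd k d G) :
    (hasFKTd k d G ↔
      (IsSLOStarTree G ∧
        ∃ v, IsInterior G v ∧
          G.degree v = d + ∑ w ∈ interiorFinset G, (G.degree w - d) ∧
          ∀ w, IsInterior G w → w ≠ v → G.degree w = d)) ∧
    (hasFKTd k d G → ∀ G' : SimpleGraph (Fin n), hasFKTd k d G' →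
        Nonempty (G ≃g G')) := by
  have hiso := hG.hasFKTd_iff hd
  refine ⟨hiso.trans (hG.nonempty_iso_optTree_iff hd), fun h G' hG' => ?_⟩
  obtain ⟨e⟩ := hiso.mp h
  obtain ⟨e'⟩ := (hG'.1.hasFKTd_iff hd).mp hG'
  exact ⟨e.trans e'.symm⟩

end FK
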